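/- Let 0<c₁<⋯<c_m be non-integer reals. For every ε>0 there is a constant C_ε depending only on c₁,…,c_m, m, ε such that for every δ>0 and every (ξ₁,…,ξ_m)∈ℝ^m, the number of δ-jumps of the sequence of exponential sums satisfies 𝒩_δ( (1/N) ∑_{n=1}^{N} e(ξ₁⌊n^{c₁}⌋+⋯+ξ_m⌊n^{c_m}⌋) )_{N∈ℕ} ≤ C_ε δ^{−(2+ε)}, uniformly in ξ₁,…,ξ_m. -/

import Mathlib

/-!
The averages `a_N` can only jump while `N` runs through a range that is short on a logarithmic scale.
Reduce the frequencies modulo one so that `|ξᵢ| ≤ 1 / 2`, and let `S(N) = ∑ |ξᵢ| N ^ cᵢ` be the size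
of the phase (`phaseSize`). Since `|a_M - a_N| ≤ 2 (1 - N / M)`, a jump of size `δ` increases `log N`
by at least `δ / 2` (`log_add_le_of_jump`). While `S(N)` is below a small multiple of `δ`, the average
is within `δ / 2` of `1` (`norm_expSum_sub_one_le`); once both `N` and `S(N)` exceed a suitable power
of `1 / δ`, it is smaller than `δ / 2` (`exists_expSum_bound`). As `S` grows at least like a power of
`N`, `log N` varies by `O(1 + log (1 / δ))` in between, which bounds the number of jumps by
`O(δ ^ (-1) (1 + log (1 / δ)))`, and in particular by `O(δ ^ (-2))` (`exists_jump_bound`).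

The analytic input is the uniform decay `|a_N| ≤ C A ^ (-η)` when `N` and `S(N)` are at least `A`.
For the smooth phase `∑ θᵢ n ^ cᵢ` of size `T`, among any `m` consecutive derivatives of high order
one has the size predicted by homogeneity (`exists_phaseDeriv_lower`); this is where the exponents
must be distinct and not integers. Around each `x` the phase is thus a polynomial with controlled
leading coefficient, up to a negligible error, on a block of consecutive integers, and Weyl
differencing (`weyl`) gives a power saving there (`exists_block`). Tiling the interval by such blocks
yields a saving `T ^ (-η)` (`exists_powerSum_bound`).

To pass to integer parts, write `e(ξ ⌊y⌋) = e(ξ y) e(-ξ fract y)`. The second factor is interpolated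
by a partition of unity of `Q` tent functions (`hat`), with an error living near the integers, and
the tents are expanded in Fourier series. Each frequency `l` changes the coefficient `ξᵢ` to
`ξᵢ + l`, which is at least as large in absolute value, so the bound for one factor less applies
(`exists_twist_bound`, `exists_twisted_bound`).
-/

open MeasureTheory Filter Finset
open scoped ENNReal NNReal

noncomputable section

/-- `e(x) = e^{2πix}`. -/
def eC (x : ℝ) : ℂ := Complex.exp (2 * Real.pi * Complex.I * x)

/-- The exponential sum `(1/N) ∑_{n=1}^{N} e(ξ₁⌊n^{c₁}⌋ + ⋯ + ξ_m⌊n^{c_m}⌋)`. -/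
def expSum (m : ℕ) (c : Fin m → ℝ) (ξ : Fin m → ℝ) (N : ℕ) : ℂ :=
  (N : ℂ)⁻¹ * ∑ n ∈ Finset.Icc 1 N, eC (∑ i, ξ i * (⌊(n : ℝ) ^ c i⌋ : ℝ))

/-! ### The additive character -/

lemma eC_eq (x : ℝ) : eC x = Complex.exp (((2 * Real.pi * x : ℝ) : ℂ) * Complex.I) := by
  unfold eC; congr 1; push_cast; ring

lemma eC_add (x y : ℝ) : eC (x + y) = eC x * eC y := by
  unfold eC; rw [← Complex.exp_add]; congr 1; push_cast; ring

lemma eC_zero : eC 0 = 1 := by simp [eC]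

lemma norm_eC (x : ℝ) : ‖eC x‖ = 1 := by
  rw [eC_eq]; exact Complex.norm_exp_ofReal_mul_I _

lemma eC_int (k : ℤ) : eC k = 1 := by
  unfold eC
  rw [Complex.exp_eq_one_iff]
  exact ⟨k, by push_cast; ring⟩

lemma conj_eC (x : ℝ) : (starRingEnd ℂ) (eC x) = eC (-x) := by
  rw [eC_eq, eC_eq, ← Complex.exp_conj]; congr 1
  rw [map_mul, Complex.conj_ofReal, Complex.conj_I]; push_cast; ring

lemma eC_re (x : ℝ) : (eC x).re = Real.cos (2 * Real.pi * x) := by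
  rw [eC_eq, Complex.exp_ofReal_mul_I_re]

lemma eC_add_eC_neg (x : ℝ) : eC x + eC (-x) = 2 * (Real.cos (2 * Real.pi * x) : ℂ) := by
  rw [← conj_eC, Complex.add_conj, eC_re]; push_cast; ring

lemma norm_eC_sub_le (x y : ℝ) : ‖eC x - eC y‖ ≤ 2 * Real.pi * |x - y| := by
  have h : eC x - eC y = eC y * (eC (x - y) - 1) := by
    rw [mul_sub, ← eC_add, mul_one]; congr 2; ring
  rw [h, norm_mul, norm_eC, one_mul, eC_eq, mul_comm _ Complex.I]
  refine Real.norm_exp_I_mul_ofReal_sub_one_le.trans ?_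
  rw [Real.norm_eq_abs, abs_mul, abs_of_pos (by positivity)]

lemma four_mul_le_norm_eC_sub_one {x : ℝ} (hx : |x| ≤ 1 / 2) : 4 * |x| ≤ ‖eC x - 1‖ := by
  rw [eC_eq, mul_comm _ Complex.I, Complex.norm_exp_I_mul_ofReal_sub_one]
  have hpi := Real.pi_pos
  have h := Real.mul_abs_le_abs_sin (x := Real.pi * x) (by
    rw [abs_mul, abs_of_pos hpi]; nlinarith)
  rw [abs_mul, abs_of_pos hpi] at h
  have h2 : 2 * Real.pi * x / 2 = Real.pi * x := by ring
  rw [h2, norm_mul, Real.norm_eq_abs, Real.norm_eq_abs]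
  have h3 : 2 / Real.pi * (Real.pi * |x|) = 2 * |x| := by field_simp
  rw [h3] at h
  norm_num
  linarith

lemma norm_sum_eC_le {ι : Type*} (s : Finset ι) (f : ι → ℝ) : ‖∑ i ∈ s, eC (f i)‖ ≤ #s := by
  refine (norm_sum_le _ _).trans ?_
  simp [norm_eC]

/-! ### Weyl's inequality for polynomial phases -/

/-- `PolyPhase d β f` says that the `d`-th forward difference of `f` is the constant `β`, i.e. that
`f` is a polynomial of degree at most `d` whose coefficient of degree `d` is `β / d!`. -/
def PolyPhase : ℕ → ℝ → (ℕ → ℝ) → Prop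
  | 0, β, f => ∀ n, f n = β
  | d + 1, β, f => PolyPhase d β (fun n => f (n + 1) - f n)

lemma PolyPhase.shift {d : ℕ} : ∀ {β : ℝ} {f : ℕ → ℝ}, PolyPhase d β f → ∀ a : ℕ,
    PolyPhase d β (fun n => f (n + a)) := by
  induction d with
  | zero => intro β f h a n; exact h _
  | succ d ih =>
    intro β f h a
    have := ih (f := fun n => f (n + 1) - f n) h a
    simp only [PolyPhase]
    convert this using 4
    ring

lemma PolyPhase.add {d : ℕ} : ∀ {β γ : ℝ} {f g : ℕ → ℝ}, PolyPhase d β f → PolyPhase d γ g →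
    PolyPhase d (β + γ) (fun n => f n + g n) := by
  induction d with
  | zero => intro β γ f g hf hg n; change f n + g n = _; rw [hf, hg]
  | succ d ih =>
    intro β γ f g hf hg
    have := ih (f := fun n => f (n + 1) - f n) (g := fun n => g (n + 1) - g n) hf hg
    simp only [PolyPhase]
    convert this using 2
    ring

lemma PolyPhase.zero (d : ℕ) : PolyPhase d 0 (fun _ => 0) := by
  induction d with
  | zero => intro n; rfl
  | succ d ih => simpa [PolyPhase] using ih

lemma PolyPhase.diff {d : ℕ} {β : ℝ} {f : ℕ → ℝ} (hf : PolyPhase (d + 1) β f) (h : ℕ) :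
    PolyPhase d (h * β) (fun n => f (n + h) - f n) := by
  induction h with
  | zero => simpa using PolyPhase.zero d
  | succ h ih =>
    have := ih.add (PolyPhase.shift (f := fun n => f (n + 1) - f n) hf h)
    convert this using 2
    · push_cast; ring
    · rename_i n
      rw [show n + (h + 1) = n + h + 1 by ring]; ring

/-- The geometric series bound, for a phase of degree one. -/
lemma norm_sum_linear_le {β : ℝ} {f : ℕ → ℝ} (hf : PolyPhase 1 β f) (h0 : β ≠ 0)
    (hβ : |β| ≤ 1 / 2) (M : ℕ) : ‖∑ n ∈ range M, eC (f n)‖ ≤ 1 / (2 * |β|) := by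
  have hstep : ∀ n, eC (f (n + 1)) = eC (f n) * eC β := by
    intro n; rw [← eC_add]; congr 1; have : f (n + 1) - f n = β := hf n; linarith
  have htel : (∑ n ∈ range M, eC (f n)) * (eC β - 1) = eC (f M) - eC (f 0) := by
    rw [← Finset.sum_range_sub (fun n => eC (f n)), Finset.sum_mul]
    refine Finset.sum_congr rfl fun n _ => ?_
    rw [hstep]; ring
  have h1 : ‖∑ n ∈ range M, eC (f n)‖ * ‖eC β - 1‖ ≤ 2 := by
    rw [← norm_mul, htel]
    refine (norm_sub_le _ _).trans ?_
    rw [norm_eC, norm_eC]; norm_num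
  have h2 := four_mul_le_norm_eC_sub_one hβ
  have h3 : 0 < |β| := abs_pos.mpr h0
  rw [le_div_iff₀ (by positivity)]
  nlinarith [norm_nonneg (∑ n ∈ range M, eC (f n))]

lemma sum_correlations_succ (f : ℕ → ℝ) (M : ℕ) :
    ∑ h ∈ Ico 1 (M + 1), ∑ n ∈ range (M + 1 - h), eC (f (n + h) - f n) =
    ∑ h ∈ Ico 1 M, ∑ n ∈ range (M - h), eC (f (n + h) - f n) +
      ∑ n ∈ range M, eC (f M - f n) := by
  have h1 : ∀ h ∈ Ico 1 (M + 1), ∑ n ∈ range (M + 1 - h), eC (f (n + h) - f n) =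
      ∑ n ∈ range (M - h), eC (f (n + h) - f n) + eC (f M - f (M - h)) := by
    intro h hh
    rw [mem_Ico] at hh
    rw [show M + 1 - h = (M - h) + 1 by omega, sum_range_succ, show M - h + h = M by omega]
  rw [sum_congr rfl h1, sum_add_distrib]
  congr 1
  · rcases Nat.eq_zero_or_pos M with rfl | hM
    · simp
    · rw [sum_Ico_succ_top hM]; simp
  · rw [← Finset.sum_range_reflect (fun n => eC (f M - f n)), Finset.sum_Ico_eq_sum_range]
    refine sum_congr (by simp) fun n hn => ?_
    rw [show M - 1 - n = M - (1 + n) by omega]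

lemma mul_conj_sum (f : ℕ → ℝ) (M : ℕ) :
    (∑ n ∈ range M, eC (f n)) * (starRingEnd ℂ) (∑ n ∈ range M, eC (f n)) =
    M + ((∑ h ∈ Ico 1 M, ∑ n ∈ range (M - h), eC (f (n + h) - f n)) +
      (starRingEnd ℂ) (∑ h ∈ Ico 1 M, ∑ n ∈ range (M - h), eC (f (n + h) - f n))) := by
  induction M with
  | zero => simp
  | succ M ih =>
    rw [sum_correlations_succ, sum_range_succ]
    have h1 : ∑ n ∈ range M, eC (f M - f n) =
        eC (f M) * (starRingEnd ℂ) (∑ n ∈ range M, eC (f n)) := by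
      rw [map_sum, mul_sum]
      refine sum_congr rfl fun n _ => ?_
      rw [conj_eC, ← eC_add]; congr 1
    have h2 : eC (f M) * (starRingEnd ℂ) (eC (f M)) = 1 := by
      rw [conj_eC, ← eC_add, add_neg_cancel, eC_zero]
    rw [h1]
    simp only [map_add, map_mul, Complex.conj_conj] at ih ⊢
    push_cast
    linear_combination ih + h2

/-- Weyl squaring. -/
lemma norm_sq_sum_le (f : ℕ → ℝ) (M : ℕ) : ‖∑ n ∈ range M, eC (f n)‖ ^ 2 ≤
    M + 2 * ∑ h ∈ Ico 1 M, ‖∑ n ∈ range (M - h), eC (f (n + h) - f n)‖ := by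
  have h := mul_conj_sum f M
  have h1 : ‖∑ n ∈ range M, eC (f n)‖ ^ 2 = ‖(∑ n ∈ range M, eC (f n)) *
      (starRingEnd ℂ) (∑ n ∈ range M, eC (f n))‖ := by
    rw [norm_mul, RCLike.norm_conj, sq]
  rw [h1, h]
  refine (norm_add_le _ _).trans ?_
  rw [Complex.norm_natCast]
  gcongr
  refine (norm_add_le _ _).trans ?_
  rw [RCLike.norm_conj, ← two_mul]
  gcongr
  exact norm_sum_le _ _

/-- Weyl's inequality when the top difference `β` is so small that no reduction modulo one is
needed; all sums of at most `L` terms gain a power of `|β| L ^ (d + 1)`. -/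
lemma weyl (d : ℕ) : ∃ C : ℝ, 1 ≤ C ∧ ∀ (L : ℕ) (β : ℝ) (f : ℕ → ℝ) (Y : ℝ), 1 ≤ L →
    PolyPhase (d + 1) β f → |β| * L ^ d ≤ 1 / 2 → 1 ≤ Y → Y ≤ |β| * L ^ (d + 1) →
    ∀ M ≤ L, ‖∑ n ∈ range M, eC (f n)‖ ≤ C * L * Y ^ (-(1 / 4 : ℝ) ^ d) := by
  induction d with
  | zero =>
    refine ⟨1, le_rfl, fun L β f Y hL hf hβ hY hY2 M hM => ?_⟩
    simp only [pow_zero, mul_one, zero_add, pow_one] at hβ hY2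
    have hL' : (1 : ℝ) ≤ L := by exact_mod_cast hL
    have h0 : 0 < |β| := by
      by_contra h
      have : |β| = 0 := le_antisymm (not_lt.mp h) (abs_nonneg _)
      rw [this] at hY2; linarith
    refine (norm_sum_linear_le hf (abs_pos.mp h0) hβ M).trans ?_
    rw [pow_zero, Real.rpow_neg_one, one_mul, ← div_eq_mul_inv,
      div_le_div_iff₀ (by positivity) (by positivity)]
    nlinarith
  | succ d ih =>
    obtain ⟨C, hC, ih⟩ := ih
    refine ⟨3 + 2 * C, by linarith, fun L β f Y hL hf hβ hY hY2 M hM => ?_⟩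
    have hL' : (1 : ℝ) ≤ L := by exact_mod_cast hL
    have hY0 : 0 < Y := by linarith
    have hML : (M : ℝ) ≤ L := by exact_mod_cast hM
    set η : ℝ := (1 / 4 : ℝ) ^ d with hη
    have hη0 : 0 < η := by positivity
    have hη1 : η ≤ 1 := pow_le_one₀ (by norm_num) (by norm_num)
    have hYL : Y ≤ L := by
      have : |β| * L ^ (d + 1 + 1) = |β| * L ^ (d + 1) * L := by ring
      nlinarith
    set V : ℝ := Y ^ (-(η / 2)) with hV
    have hV0 : 0 < V := by positivity
    -- the correlations of large shift are controlled by the case of degree one less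
    have key : ∀ h ∈ Ico 1 M, ‖∑ n ∈ range (M - h), eC (f (n + h) - f n)‖ ≤
        C * L * V + (if (h : ℝ) < L * Y ^ (-(1 / 2 : ℝ)) then (L : ℝ) else 0) := by
      intro h hh
      rw [mem_Ico] at hh
      have hh1 : (1 : ℝ) ≤ h := by exact_mod_cast hh.1
      have hhL : (h : ℝ) ≤ L := by exact_mod_cast (hh.2.le.trans hM)
      split_ifs with hc
      · refine (norm_sum_eC_le _ _).trans ?_
        rw [card_range]
        have h1 : ((M - h : ℕ) : ℝ) ≤ L := by
          exact_mod_cast (Nat.sub_le M h).trans hM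
        have : 0 ≤ C * L * V := by positivity
        linarith
      · rw [not_lt] at hc
        rw [add_zero]
        have h3 := ih L (h * β) _ (Y ^ (1 / 2 : ℝ)) hL (hf.diff h) (by
          rw [abs_mul, Nat.abs_cast]
          refine le_trans ?_ hβ
          rw [pow_succ]
          have : (h : ℝ) * |β| * L ^ d = |β| * (L ^ d * h) := by ring
          rw [this]
          gcongr) (Real.one_le_rpow hY (by norm_num)) (by
          rw [abs_mul, Nat.abs_cast]
          have e1 : L * Y ^ (-(1 / 2 : ℝ)) * Y = L * Y ^ (1 / 2 : ℝ) := by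
            rw [mul_assoc]; congr 1
            nth_rw 2 [← Real.rpow_one Y]
            rw [← Real.rpow_add hY0]; norm_num
          have e2 : L * Y ^ (1 / 2 : ℝ) ≤ h * (|β| * L ^ (d + 1 + 1)) := by
            rw [← e1]; gcongr
          have e3 : h * (|β| * (L : ℝ) ^ (d + 1 + 1)) = L * (h * |β| * L ^ (d + 1)) := by ring
          rw [e3] at e2
          exact le_of_mul_le_mul_left e2 (by linarith)) (M - h) ((Nat.sub_le M h).trans hM)
        refine h3.trans (le_of_eq ?_)
        rw [hV, ← Real.rpow_mul hY0.le]; congr 2; ring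
    have hcount : ∑ h ∈ Ico 1 M, (if (h : ℝ) < L * Y ^ (-(1 / 2 : ℝ)) then (L : ℝ) else 0) ≤
        L * Y ^ (-(1 / 2 : ℝ)) * L := by
      rw [← sum_filter, sum_const, nsmul_eq_mul]
      gcongr
      have hsub : (Ico 1 M).filter (fun h : ℕ => (h : ℝ) < L * Y ^ (-(1 / 2 : ℝ))) ⊆
          Icc 1 ⌊L * Y ^ (-(1 / 2 : ℝ))⌋₊ := by
        intro h hh
        simp only [mem_filter, mem_Ico, mem_Icc] at hh ⊢
        exact ⟨hh.1.1, Nat.le_floor hh.2.le⟩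
      have h4 := card_le_card hsub
      rw [Nat.card_Icc, Nat.add_sub_cancel] at h4
      exact (Nat.cast_le.mpr h4).trans (Nat.floor_le (by positivity))
    have hsq := norm_sq_sum_le f M
    have hsum : ∑ h ∈ Ico 1 M, ‖∑ n ∈ range (M - h), eC (f (n + h) - f n)‖ ≤
        L * (C * L * V) + L * Y ^ (-(1 / 2 : ℝ)) * L := by
      refine (sum_le_sum key).trans ?_
      rw [sum_add_distrib, sum_const, Nat.card_Ico, nsmul_eq_mul]
      have h5 : ((M - 1 : ℕ) : ℝ) ≤ L := by exact_mod_cast (Nat.sub_le M 1).trans hM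
      gcongr
    have hV1 : Y ^ (-(1 / 2 : ℝ)) ≤ V := Real.rpow_le_rpow_of_exponent_le hY (by linarith)
    have hV2 : (L : ℝ) ≤ L * L * V := by
      have : Y ^ (-1 : ℝ) ≤ V := Real.rpow_le_rpow_of_exponent_le hY (by linarith)
      rw [Real.rpow_neg_one] at this
      have h6 : 1 ≤ L * Y⁻¹ := by rw [← div_eq_mul_inv, le_div_iff₀ hY0]; linarith
      calc (L : ℝ) = L * 1 := by ring
        _ ≤ L * (L * Y⁻¹) := by gcongr
        _ ≤ L * (L * V) := by gcongr
        _ = _ := by ring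
    have hV3 : V = (Y ^ (-(1 / 4 : ℝ) ^ (d + 1))) ^ 2 := by
      rw [hV, ← Real.rpow_natCast, ← Real.rpow_mul hY0.le]; congr 1; rw [hη, pow_succ]
      push_cast; ring
    set U := Y ^ (-(1 / 4 : ℝ) ^ (d + 1)) with hU
    have hU0 : 0 ≤ U := by positivity
    have hfin : ‖∑ n ∈ range M, eC (f n)‖ ^ 2 ≤ ((3 + 2 * C) * L * U) ^ 2 := by
      have h7 : L * Y ^ (-(1 / 2 : ℝ)) * L ≤ L * L * V := by
        have := mul_le_mul_of_nonneg_left hV1 (by positivity : (0 : ℝ) ≤ L * L)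
        linarith
      have h8 : ‖∑ n ∈ range M, eC (f n)‖ ^ 2 ≤ (3 + 2 * C) * (L * L * V) := by
        have : L * (C * L * V) = C * (L * L * V) := by ring
        linarith
      refine h8.trans ?_
      have h9 : ((3 + 2 * C) * L * U) ^ 2 = (3 + 2 * C) ^ 2 * (L * L * V) := by rw [hV3]; ring
      rw [h9]
      gcongr
      nlinarith
    exact abs_le_of_sq_le_sq' hfin (by positivity) |>.2

/-! ### Taylor polynomials of sums of powers -/

lemma polyPhase_of_fwdDiff {d : ℕ} : ∀ {β : ℝ} {F : ℝ → ℝ},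
    (∀ x, (fwdDiff (1 : ℝ))^[d] F x = β) → PolyPhase d β (fun n : ℕ => F n) := by
  induction d with
  | zero => intro β F h n; exact h n
  | succ d ih =>
    intro β F h
    have := ih (β := β) (F := fwdDiff (1 : ℝ) F) (by simpa [Function.iterate_succ_apply] using h)
    simp only [PolyPhase]
    convert this using 2
    simp [fwdDiff]

lemma polyPhase_sum (a : ℕ → ℝ) (d : ℕ) :
    PolyPhase d (a d) (fun n : ℕ => ∑ j ∈ range (d + 1), a j * (n : ℝ) ^ j / (j.factorial : ℝ)) := by
  have h := polyPhase_of_fwdDiff (d := d) (β := a d)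
    (F := ∑ j ∈ range (d + 1), (a j / (j.factorial : ℝ)) • (fun x : ℝ => x ^ j)) (by
      intro x
      rw [fwdDiff_iter_finsetSum, sum_range_succ, sum_eq_zero, zero_add, fwdDiff_iter_const_smul,
        fwdDiff_iter_eq_factorial]
      · have : (d.factorial : ℝ) ≠ 0 := by positivity
        simp [Pi.smul_apply]
        field_simp
      · intro j hj
        rw [fwdDiff_iter_const_smul, fwdDiff_iter_pow_eq_zero_of_lt (mem_range.mp hj), smul_zero])
  convert h using 2
  rw [Finset.sum_apply]
  refine sum_congr rfl fun j _ => ?_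
  simp only [Pi.smul_apply, smul_eq_mul]; ring

/-- Taylor's formula for a tower `G 0, G 1, …` of successive derivatives. -/
lemma taylor_tower (d : ℕ) : ∀ (G : ℕ → ℝ → ℝ) (a H B : ℝ), 0 ≤ H →
    (∀ j, ∀ t ∈ Set.Icc a (a + H), HasDerivAt (G j) (G (j + 1) t) t) →
    (∀ t ∈ Set.Icc a (a + H), |G (d + 1) t| ≤ B) → ∀ h ∈ Set.Icc 0 H,
    |G 0 (a + h) - ∑ j ∈ range (d + 1), G j a * h ^ j / (j.factorial : ℝ)| ≤ B * H ^ (d + 1) := by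
  induction d with
  | zero =>
    intro G a H B hH hG hB h hh
    have hB0 : 0 ≤ B := (abs_nonneg _).trans (hB a ⟨le_rfl, by linarith⟩)
    have := norm_image_sub_le_of_norm_deriv_le_segment' (f := G 0) (f' := G 1) (a := a)
      (b := a + H) (C := B) (fun t ht => (hG 0 t ht).hasDerivWithinAt)
      (fun t ht => hB t ⟨ht.1, ht.2.le⟩) (a + h) ⟨by linarith [hh.1], by linarith [hh.2]⟩
    simp only [zero_add, range_one, sum_singleton, pow_zero, Nat.factorial_zero, Nat.cast_one,
      mul_one, div_one, pow_one]
    rw [Real.norm_eq_abs] at this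
    refine this.trans ?_
    have := hh.2
    gcongr
    linarith
  | succ d ih =>
    intro G a H B hH hG hB h hh
    have hB0 : 0 ≤ B := (abs_nonneg _).trans (hB a ⟨le_rfl, by linarith⟩)
    have ih' := ih (fun j => G (j + 1)) a H B hH (fun j t ht => hG (j + 1) t ht) hB
    set R : ℝ → ℝ := fun h =>
      G 0 (a + h) - ∑ j ∈ range (d + 1 + 1), G j a * h ^ j / (j.factorial : ℝ) with hR
    set R' : ℝ → ℝ := fun h =>
      G 1 (a + h) - ∑ j ∈ range (d + 1), G (j + 1) a * h ^ j / (j.factorial : ℝ) with hR'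
    have hd : ∀ t ∈ Set.Icc 0 H, HasDerivWithinAt R (R' t) (Set.Icc 0 H) t := by
      intro t ht
      apply HasDerivAt.hasDerivWithinAt
      apply HasDerivAt.sub
      · have := hG 0 (a + t) ⟨by linarith [ht.1], by linarith [ht.2]⟩
        exact HasDerivAt.comp_const_add a t this
      · have e : (fun h : ℝ => ∑ j ∈ range (d + 1 + 1), G j a * h ^ j / (j.factorial : ℝ)) =
            fun h => (∑ j ∈ range (d + 1), G (j + 1) a * h ^ (j + 1) / ((j + 1).factorial : ℝ)) +
              G 0 a := by
          funext h; rw [sum_range_succ']; simp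
        rw [e]
        apply HasDerivAt.add_const
        apply HasDerivAt.fun_sum
        intro j _
        have := ((hasDerivAt_pow (j + 1) t).const_mul (G (j + 1) a)).div_const
          ((j + 1).factorial : ℝ)
        refine this.congr_deriv ?_
        have h1 : (j.factorial : ℝ) ≠ 0 := by positivity
        rw [Nat.factorial_succ]
        push_cast
        have h2 : (j : ℝ) + 1 ≠ 0 := by positivity
        field_simp
    have h0 : R 0 = 0 := by
      simp only [hR, add_zero]
      rw [sum_range_succ']
      simp
    have := norm_image_sub_le_of_norm_deriv_le_segment' hd
      (fun t ht => ih' t ⟨ht.1, ht.2.le⟩) h hh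
    rw [h0, sub_zero, sub_zero, Real.norm_eq_abs] at this
    refine this.trans ?_
    have := hh.2
    calc B * H ^ (d + 1) * h ≤ B * H ^ (d + 1) * H := by gcongr
      _ = _ := by ring

/-- The `j`-th derivative of `t ↦ ∑ i, θ i * t ^ c i`. -/
def phaseDeriv {m : ℕ} (c θ : Fin m → ℝ) (j : ℕ) (t : ℝ) : ℝ :=
  ∑ i, θ i * ((descPochhammer ℝ j).eval (c i) * t ^ (c i - j))

/-- The size `∑ i, |θ i| x ^ c i` of the phase at the scale `x`. -/
def phaseSize {m : ℕ} (c θ : Fin m → ℝ) (x : ℝ) : ℝ := ∑ i, |θ i| * x ^ c i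

lemma phaseSize_nonneg {m : ℕ} (c θ : Fin m → ℝ) {x : ℝ} (hx : 0 ≤ x) : 0 ≤ phaseSize c θ x :=
  sum_nonneg fun _ _ => mul_nonneg (abs_nonneg _) (Real.rpow_nonneg hx _)

lemma phaseDeriv_zero {m : ℕ} (c θ : Fin m → ℝ) (t : ℝ) :
    phaseDeriv c θ 0 t = ∑ i, θ i * t ^ c i := by
  simp [phaseDeriv]

lemma hasDerivAt_phaseDeriv {m : ℕ} (c θ : Fin m → ℝ) (j : ℕ) {t : ℝ} (ht : 0 < t) :
    HasDerivAt (phaseDeriv c θ j) (phaseDeriv c θ (j + 1) t) t := by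
  unfold phaseDeriv
  apply HasDerivAt.fun_sum
  intro i _
  have h := ((Real.hasDerivAt_rpow_const (x := t) (p := c i - j) (Or.inl ht.ne')).const_mul
    ((descPochhammer ℝ j).eval (c i))).const_mul (θ i)
  refine h.congr_deriv ?_
  rw [descPochhammer_succ_eval]
  push_cast
  rw [show c i - (j + 1) = c i - j - 1 by ring]
  ring

lemma abs_phaseDeriv_le {m : ℕ} (c : Fin m → ℝ) (hpos : ∀ i, 0 < c i) (j : ℕ) :
    ∃ C : ℝ, 1 ≤ C ∧ ∀ (θ : Fin m → ℝ) (x t : ℝ), 0 < x → t ∈ Set.Icc x (2 * x) →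
      |phaseDeriv c θ j t| ≤ C * phaseSize c θ x * x ^ (-(j : ℝ)) := by
  refine ⟨1 + ∑ i, |(descPochhammer ℝ j).eval (c i)| * 2 ^ c i, ?_, fun θ x t hx ht => ?_⟩
  · have : 0 ≤ ∑ i, |(descPochhammer ℝ j).eval (c i)| * (2 : ℝ) ^ c i :=
      sum_nonneg fun i _ => by positivity
    linarith
  set K := 1 + ∑ i, |(descPochhammer ℝ j).eval (c i)| * (2 : ℝ) ^ c i with hK
  have ht0 : 0 < t := lt_of_lt_of_le hx ht.1
  unfold phaseDeriv phaseSize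
  refine (abs_sum_le_sum_abs _ _).trans ?_
  rw [mul_sum, sum_mul]
  refine sum_le_sum fun i _ => ?_
  rw [abs_mul, abs_mul, abs_of_pos (Real.rpow_pos_of_pos ht0 _), Real.rpow_sub ht0]
  have h1 : |(descPochhammer ℝ j).eval (c i)| * (2 : ℝ) ^ c i ≤ K := by
    have := single_le_sum (f := fun i => |(descPochhammer ℝ j).eval (c i)| * (2 : ℝ) ^ c i)
      (fun i _ => by positivity) (mem_univ i)
    linarith
  have h2 : t ^ c i ≤ 2 ^ c i * x ^ c i := by
    rw [← Real.mul_rpow (by norm_num) hx.le]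
    exact Real.rpow_le_rpow ht0.le ht.2 (hpos i).le
  have h3 : t ^ c i / t ^ (j : ℝ) ≤ 2 ^ c i * x ^ c i * x ^ (-(j : ℝ)) := by
    rw [Real.rpow_neg hx.le, ← div_eq_mul_inv]
    have := ht.1
    gcongr
  calc |θ i| * (|(descPochhammer ℝ j).eval (c i)| * (t ^ c i / t ^ (j : ℝ)))
      ≤ |θ i| * (|(descPochhammer ℝ j).eval (c i)| * (2 ^ c i * x ^ c i * x ^ (-(j : ℝ)))) := by
        gcongr
    _ = (|(descPochhammer ℝ j).eval (c i)| * 2 ^ c i) * (|θ i| * x ^ c i * x ^ (-(j : ℝ))) := by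
        ring
    _ ≤ K * (|θ i| * x ^ c i * x ^ (-(j : ℝ))) := by gcongr
    _ = _ := by ring

/-- The factorial powers `1, y, y (y - 1), …` at `m` distinct points form an invertible matrix. -/
lemma exists_factorialPower_lower {m : ℕ} (hm : 0 < m) (y : Fin m → ℝ)
    (hy : Function.Injective y) :
    ∃ κ : ℝ, 0 < κ ∧ ∀ b : Fin m → ℝ, ∃ j : Fin m,
      κ * ∑ i, |b i| ≤ |∑ i, b i * (descPochhammer ℝ j).eval (y i)| := by
  set M : Matrix (Fin m) (Fin m) ℝ := Matrix.of fun i j => (descPochhammer ℝ (j : ℕ)).eval (y i)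
    with hM
  have hdet : M.det ≠ 0 := by
    rw [hM, ← Matrix.det_eval_matrixOfPolynomials_eq_det_vandermonde y
      (fun j => descPochhammer ℝ (j : ℕ)) (fun j => descPochhammer_natDegree ℝ j)
      (fun j => monic_descPochhammer ℝ j)]
    exact Matrix.det_vandermonde_ne_zero_iff.mpr hy
  have hker : LinearMap.ker M.vecMulLinear = ⊥ := by
    rw [LinearMap.ker_eq_bot']
    intro b hb
    exact Matrix.eq_zero_of_vecMul_eq_zero hdet hb
  obtain ⟨K, hK, hanti⟩ := M.vecMulLinear.exists_antilipschitzWith hker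
  have hm' : (0 : ℝ) < m := by exact_mod_cast hm
  have hK' : (0 : ℝ) < K := hK
  refine ⟨1 / (K * m), by positivity, fun b => ?_⟩
  have : Nonempty (Fin m) := ⟨⟨0, hm⟩⟩
  obtain ⟨j, hj⟩ := Finite.exists_max (fun j => ‖Matrix.vecMul b M j‖)
  refine ⟨j, ?_⟩
  have h1 : ‖b‖ ≤ K * ‖Matrix.vecMul b M‖ := hanti.le_mul_norm (map_zero _) b
  have h2 : ‖Matrix.vecMul b M‖ ≤ ‖Matrix.vecMul b M j‖ :=
    (pi_norm_le_iff_of_nonneg (norm_nonneg _)).mpr hj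
  have h3 : ∑ i, |b i| ≤ m * ‖b‖ := by
    refine (sum_le_sum (fun i _ => norm_le_pi_norm b i)).trans ?_
    simp
  have h4 : Matrix.vecMul b M j = ∑ i, b i * (descPochhammer ℝ j).eval (y i) := by
    simp [Matrix.vecMul, dotProduct, hM]
  rw [← h4, ← Real.norm_eq_abs, one_div, inv_mul_le_iff₀ (by positivity)]
  calc ∑ i, |b i| ≤ m * ‖b‖ := h3
    _ ≤ m * (K * ‖Matrix.vecMul b M j‖) := by gcongr; exact h1.trans (by gcongr)
    _ = _ := by ring

/-- At every point, one of any `m` consecutive derivatives of the phase has its full size. This is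
where the exponents are required to be distinct and not natural numbers. -/
lemma exists_phaseDeriv_lower {m : ℕ} (hm : 0 < m) (c : Fin m → ℝ) (hinj : Function.Injective c)
    (hint : ∀ i, ∀ k : ℤ, c i ≠ (k : ℝ)) (d : ℕ) :
    ∃ κ : ℝ, 0 < κ ∧ ∀ (θ : Fin m → ℝ) (x : ℝ), 0 < x → ∃ j < m,
      κ * phaseSize c θ x * x ^ (-((d + j : ℕ) : ℝ)) ≤ |phaseDeriv c θ (d + j) x| := by
  obtain ⟨κ, hκ, h⟩ := exists_factorialPower_lower hm (fun i => c i - d)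
    (fun i j hij => hinj (by simpa using hij))
  have : Nonempty (Fin m) := ⟨⟨0, hm⟩⟩
  obtain ⟨i₀, hi₀⟩ := Finite.exists_min (fun i => |(descPochhammer ℝ d).eval (c i)|)
  set μ := |(descPochhammer ℝ d).eval (c i₀)| with hμ
  have hμ0 : 0 < μ := by
    rw [hμ, abs_pos, descPochhammer_eval_eq_prod_range, prod_ne_zero_iff]
    intro l _ h0
    exact hint i₀ l (by push_cast; linarith)
  refine ⟨κ * μ, by positivity, fun θ x hx => ?_⟩
  obtain ⟨j, hj⟩ := h (fun i => θ i * (descPochhammer ℝ d).eval (c i) * x ^ c i)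
  refine ⟨j, j.2, ?_⟩
  have e1 : phaseDeriv c θ (d + j) x = (∑ i, θ i * (descPochhammer ℝ d).eval (c i) * x ^ c i *
      (descPochhammer ℝ j).eval (c i - d)) * x ^ (-((d + j : ℕ) : ℝ)) := by
    unfold phaseDeriv
    rw [sum_mul]
    refine sum_congr rfl fun i _ => ?_
    rw [← descPochhammer_mul, Polynomial.eval_mul, Polynomial.eval_comp, sub_eq_add_neg (c i),
      Real.rpow_add hx]
    simp only [Polynomial.eval_sub, Polynomial.eval_X, Polynomial.eval_natCast]
    ring
  rw [e1, abs_mul, abs_of_pos (Real.rpow_pos_of_pos hx _)]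
  gcongr
  refine le_trans ?_ hj
  rw [mul_assoc]
  gcongr
  unfold phaseSize
  rw [mul_sum]
  refine sum_le_sum fun i _ => ?_
  rw [abs_mul, abs_mul, abs_of_pos (Real.rpow_pos_of_pos hx _)]
  have := hi₀ i
  calc μ * (|θ i| * x ^ c i) ≤ |(descPochhammer ℝ d).eval (c i)| * (|θ i| * x ^ c i) := by gcongr
    _ = _ := by ring

/-! ### Exponential sums over sums of powers -/

/-- Near a point `x` where the derivative of order `d + 1` has its full size, the phase agrees up to
a small error with its Taylor polynomial on a block of length `x T ^ (-2 / (2 d + 3))`, where `T` is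
the size of the phase; this length is also large enough for Weyl's inequality to gain. -/
lemma block_of_deriv_lower {m : ℕ} (c : Fin m → ℝ) (hpos : ∀ i, 0 < c i) (d : ℕ) (k : ℝ)
    (hd : 6 * k ≤ 2 * d + 3) (κ : ℝ) (hκ : 0 < κ) :
    ∃ C η : ℝ, 0 < C ∧ 0 < η ∧ ∀ (x : ℕ) (θ : Fin m → ℝ), 1 ≤ x → 1 ≤ phaseSize c θ x →
      phaseSize c θ x ≤ (x : ℝ) ^ k →
      κ * phaseSize c θ x * (x : ℝ) ^ (-((d + 1 : ℕ) : ℝ)) ≤ |phaseDeriv c θ (d + 1) x| →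
      ∃ L : ℕ, 1 ≤ L ∧ L ≤ C * x * phaseSize c θ x ^ (-η) ∧
        ‖∑ n ∈ range L, eC (phaseDeriv c θ 0 ((x + n : ℕ) : ℝ))‖ ≤
          C * L * phaseSize c θ x ^ (-η) := by
  obtain ⟨C₁, hC₁, hder₁⟩ := abs_phaseDeriv_le c hpos (d + 1)
  obtain ⟨C₂, hC₂, hder₂⟩ := abs_phaseDeriv_le c hpos (d + 2)
  obtain ⟨W, hW, hweyl⟩ := weyl d
  set p : ℝ := 2 * d + 3 with hp
  have hp0 : 0 < p := by positivity
  set a : ℝ := (1 / 4 : ℝ) ^ d with ha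
  have ha0 : 0 < a := by positivity
  have ha1 : a ≤ 1 := pow_le_one₀ (by norm_num) (by norm_num)
  set q : ℝ := κ / 2 ^ (d + 1) with hq
  have hq0 : 0 < q := by positivity
  set ω₀ : ℝ := 2 * C₁ + 1 / q with hω₀
  have hω₀q : 0 < 1 / q := by positivity
  have hpi := Real.pi_pos
  have hqa : 0 < q ^ (-a) := by positivity
  set C : ℝ := ω₀ + 2 * Real.pi * C₂ + W * q ^ (-a) with hC
  have hCω : ω₀ ≤ C := by
    have : 0 ≤ 2 * Real.pi * C₂ := by positivity
    have : 0 ≤ W * q ^ (-a) := by positivity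
    linarith
  have hC1 : 1 ≤ C := by linarith
  refine ⟨C, a / p, by linarith, by positivity, fun x θ hx hT1 hTk hlow => ?_⟩
  set T := phaseSize c θ x with hT
  have hT0 : 0 < T := by linarith
  have hx1 : (1 : ℝ) ≤ x := by exact_mod_cast hx
  have hx0 : (0 : ℝ) < x := by linarith
  set ω : ℝ := T ^ (1 / p) with hω
  have hω1 : 1 ≤ ω := Real.one_le_rpow hT1 (by positivity)
  have hω0 : 0 < ω := by linarith
  have hTω : T ^ (-(a / p)) = ω ^ (-a) := by
    rw [hω, ← Real.rpow_mul hT0.le]; congr 1; ring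
  have hωT : T = ω ^ (2 * d + 3) := by
    rw [hω, ← Real.rpow_natCast, ← Real.rpow_mul hT0.le]
    push_cast
    rw [← hp, one_div_mul_cancel hp0.ne', Real.rpow_one]
  rw [hTω]
  rcases lt_or_ge ω ω₀ with hlt | hge
  · -- bounded size: a block of one term suffices
    have h1 : 1 ≤ C * ω ^ (-a) := by
      rw [Real.rpow_neg hω0.le, ← div_eq_mul_inv, le_div_iff₀ (by positivity), one_mul]
      have : ω ^ a ≤ ω ^ (1 : ℝ) := Real.rpow_le_rpow_of_exponent_le hω1 ha1
      rw [Real.rpow_one] at this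
      linarith
    refine ⟨1, le_rfl, ?_, ?_⟩
    · have : C * x * ω ^ (-a) = (C * ω ^ (-a)) * x := by ring
      rw [this, Nat.cast_one]
      nlinarith
    · refine (norm_sum_eC_le _ _).trans ?_
      simpa using h1
  have hω6 : ω ^ 6 ≤ x := by
    have h1 : ω ^ 6 = T ^ (6 / p) := by
      rw [hω, ← Real.rpow_natCast, ← Real.rpow_mul hT0.le]; congr 1; push_cast; ring
    rw [h1]
    calc T ^ (6 / p) ≤ ((x : ℝ) ^ k) ^ (6 / p) := Real.rpow_le_rpow hT0.le hTk (by positivity)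
      _ = (x : ℝ) ^ (k * (6 / p)) := by rw [← Real.rpow_mul hx0.le]
      _ ≤ (x : ℝ) ^ (1 : ℝ) := by
        apply Real.rpow_le_rpow_of_exponent_le hx1
        rw [← mul_div_assoc, div_le_one hp0]; linarith
      _ = x := Real.rpow_one _
  set r : ℝ := x / ω ^ 2 with hr
  have hr1 : 1 ≤ r := by
    rw [hr, le_div_iff₀ (by positivity), one_mul]
    exact (pow_le_pow_right₀ hω1 (by norm_num)).trans hω6
  set L : ℕ := ⌊r⌋₊ with hL
  have hL1 : 1 ≤ L := Nat.le_floor (by simpa using hr1)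
  have hL1' : (1 : ℝ) ≤ L := by exact_mod_cast hL1
  have hLr : (L : ℝ) ≤ r := Nat.floor_le (by linarith)
  have hLr2 : r / 2 ≤ L := by
    have := Nat.lt_floor_add_one r
    rw [← hL] at this
    linarith
  have hLx : (L : ℝ) ≤ x := hLr.trans (div_le_self hx0.le (one_le_pow₀ hω1))
  have hnegpow : ∀ j : ℕ, (x : ℝ) ^ (-(j : ℝ)) = ((x : ℝ) ^ j)⁻¹ := fun j => by
    rw [Real.rpow_neg hx0.le, Real.rpow_natCast]
  set β := phaseDeriv c θ (d + 1) x with hβ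
  have hβlow : κ * T * ((x : ℝ) ^ (d + 1))⁻¹ ≤ |β| := by rw [← hnegpow]; exact hlow
  have hβup : |β| ≤ C₁ * T * ((x : ℝ) ^ (d + 1))⁻¹ := by
    rw [← hnegpow]; exact hder₁ θ x x hx0 ⟨le_rfl, by linarith⟩
  have hup : |β| * L ^ d ≤ 1 / 2 := by
    calc |β| * L ^ d ≤ C₁ * T * ((x : ℝ) ^ (d + 1))⁻¹ * r ^ d := by gcongr
      _ = C₁ * ω ^ 3 / x := by rw [hr, hωT, div_pow, ← pow_mul]; field_simp; ring
      _ ≤ 1 / 2 := by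
        rw [div_le_div_iff₀ hx0 (by norm_num)]
        have h1 : ω ^ 3 * (2 * C₁) ≤ ω ^ 3 * ω := by gcongr; linarith
        have h2 : ω ^ 4 ≤ ω ^ 6 := pow_le_pow_right₀ hω1 (by norm_num)
        nlinarith
  have hlowY : q * ω ≤ |β| * L ^ (d + 1) := by
    calc q * ω = κ * T * ((x : ℝ) ^ (d + 1))⁻¹ * (r / 2) ^ (d + 1) := by
          rw [hr, hωT, hq, div_pow, div_pow, ← pow_mul]; field_simp; ring
      _ ≤ |β| * L ^ (d + 1) := by gcongr
  have hY1 : 1 ≤ q * ω := by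
    have : 1 / q ≤ ω := by linarith
    rw [div_le_iff₀ hq0] at this; linarith
  have hmain := hweyl L β _ (q * ω) hL1 (polyPhase_sum (fun j => phaseDeriv c θ j x) (d + 1)) hup
    hY1 hlowY L le_rfl
  have htay : ∀ n ∈ range L, |phaseDeriv c θ 0 ((x + n : ℕ) : ℝ) -
      ∑ j ∈ range (d + 1 + 1), phaseDeriv c θ j x * (n : ℝ) ^ j / (j.factorial : ℝ)| ≤ C₂ / ω := by
    intro n hn
    have hn' : (n : ℝ) ≤ L := by exact_mod_cast (mem_range.mp hn).le
    have h1 := taylor_tower (d + 1) (phaseDeriv c θ) x L (C₂ * T * ((x : ℝ) ^ (d + 2))⁻¹)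
      (by positivity) (fun j t ht => hasDerivAt_phaseDeriv c θ j (by linarith [ht.1]))
      (fun t ht => by
        rw [← hnegpow]; exact hder₂ θ x t hx0 ⟨ht.1, by linarith [ht.2]⟩) n ⟨by positivity, hn'⟩
    push_cast
    refine h1.trans ?_
    calc C₂ * T * ((x : ℝ) ^ (d + 2))⁻¹ * L ^ (d + 1 + 1)
        ≤ C₂ * T * ((x : ℝ) ^ (d + 2))⁻¹ * r ^ (d + 1 + 1) := by gcongr
      _ = C₂ / ω := by rw [hr, hωT, div_pow, ← pow_mul]; field_simp; ring
  refine ⟨L, hL1, ?_, ?_⟩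
  · refine hLr.trans ?_
    have h1 : r = x * ω ^ (-2 : ℝ) := by
      rw [hr, Real.rpow_neg hω0.le, div_eq_mul_inv]; norm_num
    have h2 : ω ^ (-2 : ℝ) ≤ ω ^ (-a) := Real.rpow_le_rpow_of_exponent_le hω1 (by linarith)
    rw [h1]
    calc (x : ℝ) * ω ^ (-2 : ℝ) ≤ x * ω ^ (-a) := by gcongr
      _ = 1 * x * ω ^ (-a) := by ring
      _ ≤ _ := by gcongr
  · have hdiff : ‖∑ n ∈ range L, eC (phaseDeriv c θ 0 ((x + n : ℕ) : ℝ)) -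
        ∑ n ∈ range L, eC (∑ j ∈ range (d + 1 + 1),
          phaseDeriv c θ j x * (n : ℝ) ^ j / (j.factorial : ℝ))‖ ≤
        L * (2 * Real.pi * (C₂ / ω)) := by
      rw [← sum_sub_distrib]
      refine (norm_sum_le_of_le _ (fun n hn => (norm_eC_sub_le _ _).trans
        (mul_le_mul_of_nonneg_left (htay n hn) (by positivity)))).trans ?_
      simp
    have h1 : ω⁻¹ ≤ ω ^ (-a) := by
      rw [← Real.rpow_neg_one]; exact Real.rpow_le_rpow_of_exponent_le hω1 (by linarith)
    have h2 : (q * ω) ^ (-a) = q ^ (-a) * ω ^ (-a) := Real.mul_rpow hq0.le hω0.le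
    rw [h2] at hmain
    have h3 := norm_le_norm_add_norm_sub' (∑ n ∈ range L, eC (phaseDeriv c θ 0 ((x + n : ℕ) : ℝ)))
      (∑ n ∈ range L, eC (∑ j ∈ range (d + 1 + 1),
          phaseDeriv c θ j x * (n : ℝ) ^ j / (j.factorial : ℝ)))
    have h4 : L * (2 * Real.pi * (C₂ / ω)) ≤ L * (2 * Real.pi * C₂) * ω ^ (-a) := by
      rw [div_eq_mul_inv]
      calc L * (2 * Real.pi * (C₂ * ω⁻¹)) = L * (2 * Real.pi * C₂) * ω⁻¹ := by ring
        _ ≤ _ := by gcongr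
    have h5 : 0 ≤ ω₀ * L * ω ^ (-a) := by positivity
    calc _ ≤ W * L * (q ^ (-a) * ω ^ (-a)) + L * (2 * Real.pi * C₂) * ω ^ (-a) := by linarith
      _ ≤ W * L * (q ^ (-a) * ω ^ (-a)) + L * (2 * Real.pi * C₂) * ω ^ (-a) +
          ω₀ * L * ω ^ (-a) := by linarith
      _ = _ := by rw [hC]; ring

/-- A finite number of power savings, each with its own constants, hold with common constants. -/
lemma exists_uniform_constants {P : ℕ → ℝ → ℝ → Prop} (m : ℕ)
    (hmono : ∀ j C C' η η', C ≤ C' → 0 < η' → η' ≤ η → P j C η → P j C' η')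
    (h : ∀ j, ∃ C η : ℝ, 0 < C ∧ 0 < η ∧ P j C η) :
    ∃ C η : ℝ, 0 < C ∧ 0 < η ∧ ∀ j < m, P j C η := by
  induction m with
  | zero => exact ⟨1, 1, one_pos, one_pos, fun j hj => absurd hj (by omega)⟩
  | succ m ih =>
    obtain ⟨C, η, hC, hη, h1⟩ := ih
    obtain ⟨C', η', hC', hη', h2⟩ := h m
    refine ⟨max C C', min η η', lt_max_of_lt_left hC, lt_min hη hη', fun j hj => ?_⟩
    rcases Nat.lt_succ_iff_lt_or_eq.mp hj with hj | rfl
    · exact hmono _ _ _ _ _ (le_max_left _ _) (lt_min hη hη') (min_le_left _ _) (h1 j hj)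
    · exact hmono _ _ _ _ _ (le_max_right _ _) (lt_min hη hη') (min_le_right _ _) h2

/-- Every point `x` starts a block of consecutive integers on which the exponential sum gains a
power of the size of the phase. -/
lemma exists_block {m : ℕ} (hm : 0 < m) (c : Fin m → ℝ) (hpos : ∀ i, 0 < c i)
    (hinj : Function.Injective c) (hint : ∀ i, ∀ k : ℤ, c i ≠ (k : ℝ)) (k : ℝ) :
    ∃ C η : ℝ, 0 < C ∧ 0 < η ∧ ∀ (x : ℕ) (θ : Fin m → ℝ), 1 ≤ x → 1 ≤ phaseSize c θ x →
      phaseSize c θ x ≤ (x : ℝ) ^ k →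
      ∃ L : ℕ, 1 ≤ L ∧ L ≤ C * x * phaseSize c θ x ^ (-η) ∧
        ‖∑ n ∈ range L, eC (phaseDeriv c θ 0 ((x + n : ℕ) : ℝ))‖ ≤
          C * L * phaseSize c θ x ^ (-η) := by
  obtain ⟨d, hd⟩ := exists_nat_ge (3 * k)
  obtain ⟨κ, hκ, hlow⟩ := exists_phaseDeriv_lower hm c hinj hint (d + 1)
  obtain ⟨C, η, hC, hη, h⟩ := exists_uniform_constants (P := fun j C η =>
      ∀ (x : ℕ) (θ : Fin m → ℝ), 1 ≤ x → 1 ≤ phaseSize c θ x →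
      phaseSize c θ x ≤ (x : ℝ) ^ k →
      κ * phaseSize c θ x * (x : ℝ) ^ (-((d + j + 1 : ℕ) : ℝ)) ≤ |phaseDeriv c θ (d + j + 1) x| →
      ∃ L : ℕ, 1 ≤ L ∧ L ≤ C * x * phaseSize c θ x ^ (-η) ∧
        ‖∑ n ∈ range L, eC (phaseDeriv c θ 0 ((x + n : ℕ) : ℝ))‖ ≤
          C * L * phaseSize c θ x ^ (-η)) m
    (by
      intro j C C' η η' hC hη' hη hP x θ hx hT hTk hl
      obtain ⟨L, hL1, hL2, hL3⟩ := hP x θ hx hT hTk hl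
      have h1 : phaseSize c θ x ^ (-η) ≤ phaseSize c θ x ^ (-η') :=
        Real.rpow_le_rpow_of_exponent_le hT (by linarith)
      have hx0 : (0 : ℝ) < x := by exact_mod_cast hx
      have hp : 0 < phaseSize c θ x ^ (-η) := Real.rpow_pos_of_pos (by linarith) _
      have hC0 : 0 < C := by
        by_contra hc
        have h2 : C * x * phaseSize c θ x ^ (-η) ≤ 0 := by
          have : C * (x * phaseSize c θ x ^ (-η)) ≤ 0 :=
            mul_nonpos_of_nonpos_of_nonneg (not_lt.mp hc) (by positivity)
          linarith
        have : (1 : ℝ) ≤ L := by exact_mod_cast hL1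
        linarith
      have hC0' : 0 < C' := by linarith
      exact ⟨L, hL1, hL2.trans (by gcongr), hL3.trans (by gcongr)⟩)
    (fun j => block_of_deriv_lower c hpos (d + j) k (by push_cast; nlinarith [j.cast_nonneg (α := ℝ)])
      κ hκ)
  refine ⟨C, η, hC, hη, fun x θ hx hT hTk => ?_⟩
  obtain ⟨j, hj, hl⟩ := hlow θ x (by exact_mod_cast hx)
  rw [show d + 1 + j = d + j + 1 by ring] at hl
  exact h j hj x θ hx hT hTk hl

lemma phaseSize_mono {m : ℕ} (c : Fin m → ℝ) (hpos : ∀ i, 0 < c i) (θ : Fin m → ℝ) {x y : ℝ}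
    (hx : 0 ≤ x) (hxy : x ≤ y) : phaseSize c θ x ≤ phaseSize c θ y :=
  sum_le_sum fun i _ => mul_le_mul_of_nonneg_left (Real.rpow_le_rpow hx hxy (hpos i).le)
    (abs_nonneg _)

lemma phaseSize_scale_lower {m : ℕ} (c : Fin m → ℝ) (b : ℝ) (hb : ∀ i, c i ≤ b)
    (θ : Fin m → ℝ) {x y : ℝ} (hx : 0 < x) (hxy : x ≤ y) :
    (x / y) ^ b * phaseSize c θ y ≤ phaseSize c θ x := by
  have hy : 0 < y := by linarith
  unfold phaseSize
  rw [mul_sum]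
  refine sum_le_sum fun i _ => ?_
  have h1 : (x / y) ^ b ≤ (x / y) ^ c i :=
    Real.rpow_le_rpow_of_exponent_ge (by positivity) (by rwa [div_le_one hy]) (hb i)
  have h2 : (x / y) ^ c i * y ^ c i = x ^ c i := by
    rw [← Real.mul_rpow (by positivity) hy.le, div_mul_cancel₀ _ hy.ne']
  calc (x / y) ^ b * (|θ i| * y ^ c i) ≤ (x / y) ^ c i * (|θ i| * y ^ c i) := by gcongr
    _ = |θ i| * ((x / y) ^ c i * y ^ c i) := by ring
    _ = _ := by rw [h2]

/-- If every point starts a block of length at most `B` on which the mean of `f` is at most `D`,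
then intervals can be tiled by such blocks, except for a last one of length at most `B`. -/
lemma norm_sum_le_of_blocks (f : ℕ → ℂ) (hf : ∀ n, ‖f n‖ ≤ 1) (N x₀ : ℕ) (B D : ℝ) (hB : 0 ≤ B)
    (hD : 0 ≤ D)
    (h : ∀ x, x₀ ≤ x → x ≤ N → ∃ L : ℕ, 1 ≤ L ∧ L ≤ B ∧ ‖∑ n ∈ range L, f (x + n)‖ ≤ D * L)
    (x : ℕ) (hx : x₀ ≤ x) : ‖∑ n ∈ Ico x (N + 1), f n‖ ≤ D * ((N + 1 - x : ℕ) : ℝ) + B := by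
  obtain ⟨r, hr⟩ : ∃ r, r = N + 1 - x := ⟨_, rfl⟩
  induction r using Nat.strong_induction_on generalizing x with
  | _ r ih =>
    rcases Nat.lt_or_ge N x with hlt | hge
    · rw [Ico_eq_empty (by omega)]
      simp only [sum_empty, norm_zero]
      positivity
    · obtain ⟨L, hL1, hLB, hLD⟩ := h x hx hge
      rcases Nat.lt_or_ge (N + 1) (x + L) with hover | hin
      · calc ‖∑ n ∈ Ico x (N + 1), f n‖ ≤ ∑ n ∈ Ico x (N + 1), (1 : ℝ) :=
              norm_sum_le_of_le _ fun n _ => hf n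
          _ = ((N + 1 - x : ℕ) : ℝ) := by simp
          _ ≤ L := by exact_mod_cast (by omega : N + 1 - x ≤ L)
          _ ≤ B := hLB
          _ ≤ _ := by
            have : 0 ≤ D * ((N + 1 - x : ℕ) : ℝ) := by positivity
            linarith
      · have h1 := ih (N + 1 - (x + L)) (by omega) (x + L) (by omega) rfl
        rw [← sum_Ico_consecutive f (Nat.le_add_right x L) hin]
        have h2 : ∑ n ∈ Ico x (x + L), f n = ∑ n ∈ range L, f (x + n) := by
          rw [sum_Ico_eq_sum_range, Nat.add_sub_cancel_left]
        have h3 : ((N + 1 - x : ℕ) : ℝ) = L + ((N + 1 - (x + L) : ℕ) : ℝ) := by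
          exact_mod_cast (by omega : N + 1 - x = L + (N + 1 - (x + L)))
        rw [h2, h3]
        refine (norm_add_le _ _).trans ?_
        linarith

/-- Power saving for the exponential sum of a combination of non-integer powers: if its size `T` at
`N` is between `1` and a fixed power of `N`, the saving is a power of `T`. -/
lemma exists_powerSum_bound {m : ℕ} (hm : 0 < m) (c : Fin m → ℝ) (hpos : ∀ i, 0 < c i)
    (hinj : Function.Injective c) (hint : ∀ i, ∀ k : ℤ, c i ≠ (k : ℝ)) (k : ℝ) (hk : 0 < k) :
    ∃ C η : ℝ, 0 < C ∧ 0 < η ∧ ∀ (N : ℕ) (θ : Fin m → ℝ), 1 ≤ N → 1 ≤ phaseSize c θ N →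
      phaseSize c θ N ≤ (N : ℝ) ^ k →
      ‖∑ n ∈ Icc 1 N, eC (∑ i, θ i * (n : ℝ) ^ c i)‖ ≤ C * N * phaseSize c θ N ^ (-η) := by
  obtain ⟨C, η, hC, hη, hblock⟩ := exists_block hm c hpos hinj hint (2 * k)
  set b : ℝ := ∑ i, c i with hb
  have hb0 : 0 ≤ b := sum_nonneg fun i _ => (hpos i).le
  have hcb : ∀ i, c i ≤ b := fun i => single_le_sum (fun j _ => (hpos j).le) (mem_univ i)
  set s : ℝ := 1 / (2 * (b + k)) with hs
  have hbk : 0 < b + k := by positivity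
  have hs0 : 0 < s := by positivity
  have hsb : s * b ≤ 1 / 2 := by
    rw [hs, div_mul_eq_mul_div, div_le_div_iff₀ (by positivity) (by norm_num)]; linarith
  have hsk : s * k ≤ 1 / 2 := by
    rw [hs, div_mul_eq_mul_div, div_le_div_iff₀ (by positivity) (by norm_num)]; linarith
  refine ⟨1 + 2 * C, min s (η / 2), by positivity, by positivity, fun N θ hN hT1 hTk => ?_⟩
  set T := phaseSize c θ N with hT
  have hT0 : 0 < T := by linarith
  have hN1 : (1 : ℝ) ≤ N := by exact_mod_cast hN
  have hN0 : (0 : ℝ) < N := by linarith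
  set Z : ℝ := T ^ s with hZ
  have hZ1 : 1 ≤ Z := Real.one_le_rpow hT1 hs0.le
  have hZ0 : 0 < Z := by linarith
  have hZN : Z ≤ (N : ℝ) ^ (1 / 2 : ℝ) := by
    calc Z ≤ ((N : ℝ) ^ k) ^ s := Real.rpow_le_rpow hT0.le hTk hs0.le
      _ = (N : ℝ) ^ (k * s) := by rw [← Real.rpow_mul hN0.le]
      _ ≤ _ := Real.rpow_le_rpow_of_exponent_le hN1 (by linarith)
  set x₀ : ℕ := ⌈N / Z⌉₊ with hx₀
  have hNZ : 0 < N / Z := by positivity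
  have hx₀1 : 1 ≤ x₀ := Nat.ceil_pos.mpr hNZ
  have hx₀N : x₀ ≤ N := Nat.ceil_le.mpr (div_le_self hN0.le hZ1)
  set f : ℕ → ℂ := fun n => eC (∑ i, θ i * (n : ℝ) ^ c i) with hf
  have hTη : T ^ (-(η / 2)) = (T ^ (1 / 2 : ℝ)) ^ (-η) := by
    rw [← Real.rpow_mul hT0.le]; congr 1; ring
  have hpieces : ∀ x, x₀ ≤ x → x ≤ N → ∃ L : ℕ, 1 ≤ L ∧ L ≤ C * N * T ^ (-(η / 2)) ∧
      ‖∑ n ∈ range L, f (x + n)‖ ≤ C * T ^ (-(η / 2)) * L := by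
    intro x hx hxN
    have hxx : N / Z ≤ (x : ℝ) := (Nat.le_ceil _).trans (by exact_mod_cast hx)
    have hx0 : (0 : ℝ) < x := by linarith
    have hxN' : (x : ℝ) ≤ N := by exact_mod_cast hxN
    have hlow : T ^ (1 / 2 : ℝ) ≤ phaseSize c θ x := by
      have h2 : Z⁻¹ ≤ (x : ℝ) / N := by
        rw [le_div_iff₀ hN0]; rw [div_eq_inv_mul] at hxx; exact hxx
      calc T ^ (1 / 2 : ℝ) ≤ T ^ (-(s * b) + 1) :=
            Real.rpow_le_rpow_of_exponent_le hT1 (by linarith)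
        _ = (Z⁻¹) ^ b * T := by
          rw [Real.rpow_add hT0, Real.rpow_one, hZ, Real.inv_rpow (by positivity),
            ← Real.rpow_mul hT0.le, Real.rpow_neg hT0.le]
        _ ≤ ((x : ℝ) / N) ^ b * T := by gcongr
        _ ≤ _ := phaseSize_scale_lower c b hcb θ hx0 hxN'
    have hone : 1 ≤ T ^ (1 / 2 : ℝ) := Real.one_le_rpow hT1 (by norm_num)
    have hup : phaseSize c θ x ≤ (x : ℝ) ^ (2 * k) := by
      have h1 : (N : ℝ) ^ (1 / 2 : ℝ) ≤ x := by
        refine le_trans ?_ hxx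
        rw [le_div_iff₀ hZ0]
        calc (N : ℝ) ^ (1 / 2 : ℝ) * Z ≤ (N : ℝ) ^ (1 / 2 : ℝ) * (N : ℝ) ^ (1 / 2 : ℝ) := by gcongr
          _ = N := by rw [← Real.rpow_add hN0]; norm_num
      calc phaseSize c θ x ≤ T := phaseSize_mono c hpos θ hx0.le hxN'
        _ ≤ (N : ℝ) ^ k := hTk
        _ = ((N : ℝ) ^ (1 / 2 : ℝ)) ^ (2 * k) := by rw [← Real.rpow_mul hN0.le]; congr 1; ring
        _ ≤ _ := Real.rpow_le_rpow (by positivity) h1 (by positivity)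
    obtain ⟨L, hL1, hL2, hL3⟩ := hblock x θ (by omega) (hone.trans hlow) hup
    have hpow : phaseSize c θ x ^ (-η) ≤ T ^ (-(η / 2)) := by
      rw [hTη]
      exact Real.rpow_le_rpow_of_nonpos (by positivity) hlow (by linarith)
    have hp0 : 0 ≤ phaseSize c θ x ^ (-η) := Real.rpow_nonneg (phaseSize_nonneg c θ hx0.le) _
    refine ⟨L, hL1, hL2.trans (by gcongr), ?_⟩
    calc ‖∑ n ∈ range L, f (x + n)‖
        = ‖∑ n ∈ range L, eC (phaseDeriv c θ 0 ((x + n : ℕ) : ℝ))‖ := by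
          simp only [hf, phaseDeriv_zero]
      _ ≤ _ := hL3
      _ ≤ C * L * T ^ (-(η / 2)) := by gcongr
      _ = _ := by ring
  have hmain := norm_sum_le_of_blocks f (fun n => (norm_eC _).le) N x₀ _ _ (by positivity)
    (by positivity) hpieces x₀ le_rfl
  have hsplit : ∑ n ∈ Icc 1 N, f n = ∑ n ∈ Ico 1 x₀, f n + ∑ n ∈ Ico x₀ (N + 1), f n := by
    rw [sum_Ico_consecutive f hx₀1 (by omega)]; rfl
  have hfirst : ‖∑ n ∈ Ico 1 x₀, f n‖ ≤ N * T ^ (-s) := by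
    calc ‖∑ n ∈ Ico 1 x₀, f n‖ ≤ ((Ico 1 x₀).card : ℝ) := norm_sum_eC_le _ _
      _ = ((x₀ - 1 : ℕ) : ℝ) := by rw [Nat.card_Ico]
      _ = x₀ - 1 := by rw [Nat.cast_sub hx₀1]; simp
      _ ≤ N / Z := by linarith [Nat.ceil_lt_add_one hNZ.le]
      _ = _ := by rw [hZ, Real.rpow_neg hT0.le, div_eq_mul_inv]
  have e1 : T ^ (-s) ≤ T ^ (-(min s (η / 2))) :=
    Real.rpow_le_rpow_of_exponent_le hT1 (by linarith [min_le_left s (η / 2)])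
  have e2 : T ^ (-(η / 2)) ≤ T ^ (-(min s (η / 2))) :=
    Real.rpow_le_rpow_of_exponent_le hT1 (by linarith [min_le_right s (η / 2)])
  have e3 : ((N + 1 - x₀ : ℕ) : ℝ) ≤ N := by exact_mod_cast (by omega : N + 1 - x₀ ≤ N)
  rw [hsplit]
  calc _ ≤ N * T ^ (-s) + (C * T ^ (-(η / 2)) * ((N + 1 - x₀ : ℕ) : ℝ) +
        C * N * T ^ (-(η / 2))) := (norm_add_le _ _).trans (add_le_add hfirst hmain)
    _ ≤ N * T ^ (-(min s (η / 2))) + (C * T ^ (-(min s (η / 2))) * N +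
        C * N * T ^ (-(min s (η / 2)))) := by gcongr
    _ = _ := by ring

/-! ### Smoothing the fractional part -/

/-- The `1`-periodic tent function of height `1` supported within `1 / Q` of the integers. -/
def hat (Q : ℕ) (x : ℝ) : ℝ :=
  max 0 (1 - Q * Int.fract x) + max 0 (1 - Q * (1 - Int.fract x))

/-- The Fourier cosine coefficients of `hat Q`; the division by zero makes `hatCoeff Q 0 = 0`. -/
def hatCoeff (Q l : ℕ) : ℝ :=
  Q / Real.pi ^ 2 * (1 - Real.cos (2 * Real.pi * l / Q)) / (l : ℝ) ^ 2

lemma hat_nonneg (Q : ℕ) (x : ℝ) : 0 ≤ hat Q x := by unfold hat; positivity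

lemma hasSum_cos_div_sq (x : ℝ) :
    HasSum (fun l : ℕ => Real.cos (2 * Real.pi * l * x) / (l : ℝ) ^ 2)
      (Real.pi ^ 2 * (Int.fract x ^ 2 - Int.fract x + 1 / 6)) := by
  have h := hasSum_one_div_nat_pow_mul_cos one_ne_zero
    (x := Int.fract x) ⟨Int.fract_nonneg x, (Int.fract_lt_one x).le⟩
  have e := bernoulliFun_two (Int.fract x)
  unfold bernoulliFun at e
  rw [mul_one, e] at h
  convert h using 1
  · funext l
    have : 2 * Real.pi * l * Int.fract x =
        2 * Real.pi * l * x - ((l * ⌊x⌋ : ℤ) : ℝ) * (2 * Real.pi) := by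
      rw [← Int.self_sub_floor]; push_cast; ring
    rw [this, Real.cos_sub_int_mul_two_pi]; ring
  · norm_num [Nat.factorial]; left; ring

lemma fract_eq_of_sub_int {a b : ℝ} (z : ℤ) (h0 : 0 ≤ b) (h1 : b < 1) (h : a - b = z) :
    Int.fract a = b := Int.fract_eq_iff.mpr ⟨h0, h1, z, h⟩

/-- The tent is a second difference of the periodic quadratic `fract x ^ 2 - fract x`. -/
lemma hat_eq_second_diff (Q : ℕ) (hQ : 1 ≤ Q) (x : ℝ) :
    hat Q x = 1 / Q - Q / 2 * ((Int.fract (x + 1 / Q) ^ 2 - Int.fract (x + 1 / Q) + 1 / 6) +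
      (Int.fract (x - 1 / Q) ^ 2 - Int.fract (x - 1 / Q) + 1 / 6) -
      2 * (Int.fract x ^ 2 - Int.fract x + 1 / 6)) := by
  have hQ1 : (1 : ℝ) ≤ Q := by exact_mod_cast hQ
  have hQ0 : (0 : ℝ) < Q := by linarith
  obtain ⟨κ, hκ⟩ : ∃ κ : ℝ, κ = 1 / Q := ⟨_, rfl⟩
  have hκ0 : 0 < κ := by rw [hκ]; positivity
  have hκ1 : κ ≤ 1 := by rw [hκ, div_le_one hQ0]; exact hQ1
  have hQκ : (Q : ℝ) * κ = 1 := by rw [hκ]; field_simp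
  have f0 := Int.fract_nonneg x
  have f1 := Int.fract_lt_one x
  have hfl := Int.self_sub_floor x
  unfold hat
  rw [← hκ]
  set f := Int.fract x with hf
  have hA : (f + κ < 1 ∧ Int.fract (x + κ) = f + κ ∧ max 0 (1 - Q * (1 - f)) = 0) ∨
      (1 ≤ f + κ ∧ Int.fract (x + κ) = f + κ - 1 ∧
        max 0 (1 - Q * (1 - f)) = 1 - Q * (1 - f)) := by
    rcases lt_or_ge (f + κ) 1 with h | h
    · exact Or.inl ⟨h, fract_eq_of_sub_int ⌊x⌋ (by linarith) h (by linarith),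
        max_eq_left (by nlinarith)⟩
    · exact Or.inr ⟨h, fract_eq_of_sub_int (⌊x⌋ + 1) (by linarith) (by linarith)
        (by push_cast; linarith), max_eq_right (by nlinarith)⟩
  have hB : (κ ≤ f ∧ Int.fract (x - κ) = f - κ ∧ max 0 (1 - Q * f) = 0) ∨
      (f < κ ∧ Int.fract (x - κ) = f - κ + 1 ∧ max 0 (1 - Q * f) = 1 - Q * f) := by
    rcases le_or_gt κ f with h | h
    · exact Or.inl ⟨h, fract_eq_of_sub_int ⌊x⌋ (by linarith) (by linarith) (by linarith),
        max_eq_left (by nlinarith)⟩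
    · exact Or.inr ⟨h, fract_eq_of_sub_int (⌊x⌋ - 1) (by linarith) (by linarith)
        (by push_cast; linarith), max_eq_right (by nlinarith)⟩
  rcases hA with ⟨_, a2, a3⟩ | ⟨_, a2, a3⟩ <;> rcases hB with ⟨_, b2, b3⟩ | ⟨_, b2, b3⟩ <;>
    rw [a2, a3, b2, b3]
  · linear_combination κ * hQκ
  · linear_combination (κ - 1) * hQκ
  · linear_combination (κ - 1) * hQκ
  · linear_combination (κ - 2) * hQκ

lemma hasSum_hat (Q : ℕ) (hQ : 1 ≤ Q) (x : ℝ) :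
    HasSum (fun l : ℕ => hatCoeff Q l * Real.cos (2 * Real.pi * l * x)) (hat Q x - 1 / Q) := by
  have hQ0 : (0 : ℝ) < Q := by exact_mod_cast hQ
  have h := (((hasSum_cos_div_sq (x + 1 / Q)).add (hasSum_cos_div_sq (x - 1 / Q))).sub
    ((hasSum_cos_div_sq x).mul_left 2)).mul_left (-(Q / 2 / Real.pi ^ 2))
  have hpi := Real.pi_ne_zero
  have hval : hat Q x - 1 / Q = -(Q / 2 / Real.pi ^ 2) *
      (Real.pi ^ 2 * (Int.fract (x + 1 / Q) ^ 2 - Int.fract (x + 1 / Q) + 1 / 6) +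
        Real.pi ^ 2 * (Int.fract (x - 1 / Q) ^ 2 - Int.fract (x - 1 / Q) + 1 / 6) -
        2 * (Real.pi ^ 2 * (Int.fract x ^ 2 - Int.fract x + 1 / 6))) := by
    rw [hat_eq_second_diff Q hQ x]
    field_simp
    ring
  rw [hval]
  refine (congrArg (HasSum · _) (funext fun l => ?_)).mp h
  symm
  have e1 : 2 * Real.pi * l * (x + 1 / Q) = 2 * Real.pi * l * x + 2 * Real.pi * l / Q := by ring
  have e2 : 2 * Real.pi * l * (x - 1 / Q) = 2 * Real.pi * l * x - 2 * Real.pi * l / Q := by ring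
  rw [e1, e2, Real.cos_add, Real.cos_sub, hatCoeff]
  ring

lemma hatCoeff_nonneg (Q l : ℕ) : 0 ≤ hatCoeff Q l := by
  have := Real.cos_le_one (2 * Real.pi * l / Q)
  unfold hatCoeff
  have : 0 ≤ 1 - Real.cos (2 * Real.pi * l / Q) := by linarith
  positivity

lemma hatCoeff_le (Q l : ℕ) : hatCoeff Q l ≤ Q / (l : ℝ) ^ 2 := by
  have h1 := Real.neg_one_le_cos (2 * Real.pi * l / Q)
  have hpi := Real.pi_gt_three
  unfold hatCoeff
  gcongr
  rw [div_mul_eq_mul_div, div_le_iff₀ (by positivity)]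
  gcongr
  nlinarith

lemma hasSum_hatCoeff (Q : ℕ) (hQ : 1 ≤ Q) : HasSum (hatCoeff Q) (1 - 1 / Q) := by
  have h := hasSum_hat Q hQ 0
  have hQ1 : (1 : ℝ) ≤ Q := by exact_mod_cast hQ
  have : hat Q 0 = 1 := by
    unfold hat
    simp
    linarith
  rw [this] at h
  simpa using h

/-- The translates of the tent by multiples of `1 / Q` form a partition of unity: translating
averages out every frequency except multiples of `Q`, whose coefficients vanish. -/
lemma sum_hat_translates (Q : ℕ) (hQ : 1 ≤ Q) (x : ℝ) :
    ∑ q ∈ range Q, hat Q (x - q / Q) = 1 := by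
  have hQ0 : (Q : ℝ) ≠ 0 := by positivity
  have h := hasSum_sum (s := range Q) fun q _ => hasSum_hat Q hQ (x - (q : ℕ) / Q)
  have hz : (fun l : ℕ => ∑ q ∈ range Q,
      hatCoeff Q l * Real.cos (2 * Real.pi * l * (x - (q : ℕ) / Q))) = fun _ => 0 := by
    funext l
    rw [← mul_sum, mul_eq_zero]
    have hre : ∑ q ∈ range Q, Real.cos (2 * Real.pi * l * (x - (q : ℕ) / Q)) =
        (eC (l * x) * ∑ q ∈ range Q, eC (-(l / Q)) ^ q).re := by
      rw [mul_sum, Complex.re_sum]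
      refine sum_congr rfl fun q _ => ?_
      have : eC (l * x) * eC (-(l / Q)) ^ q = eC (l * (x - q / Q)) := by
        rw [eC_eq, eC_eq, eC_eq, ← Complex.exp_nat_mul, ← Complex.exp_add]
        congr 1; push_cast; ring
      rw [this, eC_re]; congr 1; ring
    by_cases hω : eC (-(l / Q)) = 1
    · left
      have h1 : Real.cos (2 * Real.pi * l / Q) = 1 := by
        have := congrArg Complex.re hω
        rw [eC_re, Complex.one_re] at this
        rw [← this, ← Real.cos_neg]; congr 1; ring
      rw [hatCoeff, h1]; simp
    · right
      have hpow : eC (-(l / Q)) ^ Q = 1 := by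
        have : eC (-(l / Q)) ^ Q = eC ((-(l : ℤ) : ℤ) : ℝ) := by
          rw [eC_eq, eC_eq, ← Complex.exp_nat_mul]
          congr 1; push_cast
          have : (Q : ℂ) ≠ 0 := by exact_mod_cast hQ0
          field_simp
        rw [this, eC_int]
      rw [hre, geom_sum_eq hω, hpow]; simp
  rw [hz] at h
  have h0 := h.unique hasSum_zero
  rw [sum_sub_distrib] at h0
  simp only [sum_const, card_range, nsmul_eq_mul, mul_one_div_cancel hQ0] at h0
  linarith

/-- The discontinuous function `e(-ξ fract x)` is interpolated by tents, away from the integers. -/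
lemma norm_eC_fract_sub_hat (Q : ℕ) (hQ : 1 ≤ Q) (ξ : ℝ) (hξ : |ξ| ≤ 1 / 2) (x : ℝ) :
    ‖eC (-(ξ * Int.fract x)) - ∑ q ∈ range Q, eC (-(ξ * (q / Q))) * (hat Q (x - q / Q) : ℂ)‖ ≤
      Real.pi / Q + 2 * hat Q x := by
  have hQ1 : (1 : ℝ) ≤ Q := by exact_mod_cast hQ
  have hQ0 : (0 : ℝ) < Q := by linarith
  have hpi := Real.pi_pos
  have hone : eC (-(ξ * Int.fract x)) =
      ∑ q ∈ range Q, eC (-(ξ * Int.fract x)) * (hat Q (x - q / Q) : ℂ) := by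
    rw [← mul_sum, ← Complex.ofReal_sum, sum_hat_translates Q hQ x]; simp
  rw [hone, ← sum_sub_distrib]
  have hterm : ∀ q ∈ range Q, ‖eC (-(ξ * Int.fract x)) * (hat Q (x - q / Q) : ℂ) -
      eC (-(ξ * (q / Q))) * (hat Q (x - q / Q) : ℂ)‖ ≤
      Real.pi / Q * hat Q (x - q / Q) + if q = 0 then 2 * hat Q x else 0 := by
    intro q hq
    have hqQ := mem_range.mp hq
    have hh := hat_nonneg Q (x - q / Q)
    rw [← sub_mul, norm_mul, Complex.norm_real, Real.norm_of_nonneg hh]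
    split_ifs with h0
    · subst h0
      have : ‖eC (-(ξ * Int.fract x)) - eC (-(ξ * ((0 : ℕ) / Q)))‖ ≤ 2 := by
        refine (norm_sub_le _ _).trans ?_
        rw [norm_eC, norm_eC]; norm_num
      have h3 : 0 ≤ Real.pi / Q * hat Q (x - (0 : ℕ) / Q) := by positivity
      have h4 : hat Q (x - (0 : ℕ) / Q) = hat Q x := by simp
      rw [h4] at h3 ⊢
      nlinarith [hat_nonneg Q x]
    · rw [add_zero]
      rcases hh.eq_or_lt with hz | hlt
      · rw [← hz]; simp
      gcongr
      -- for `q ≠ 0` the tent at `q / Q` lies inside the period, so it only sees points near `q / Q`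
      have hclose : |Int.fract x - q / Q| ≤ 1 / Q := by
        obtain ⟨κ, hκ⟩ : ∃ κ : ℝ, κ = 1 / Q := ⟨_, rfl⟩
        have hκ0 : 0 < κ := by rw [hκ]; positivity
        have hQκ : (Q : ℝ) * κ = 1 := by rw [hκ]; field_simp
        have hq1 : (1 : ℝ) ≤ q := by exact_mod_cast Nat.one_le_iff_ne_zero.mpr h0
        have hq2 : (q : ℝ) + 1 ≤ Q := by exact_mod_cast hqQ
        have hqκ : (q : ℝ) / Q = q * κ := by rw [hκ]; ring
        have f0 := Int.fract_nonneg x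
        have f1 := Int.fract_lt_one x
        have hfl := Int.self_sub_floor x
        rw [← hκ, hqκ]
        rw [hqκ] at hlt
        set f := Int.fract x with hf
        have hy : Int.fract (x - q * κ) < κ ∨ 1 - κ < Int.fract (x - q * κ) := by
          by_contra hcon
          push Not at hcon
          unfold hat at hlt
          rw [max_eq_left (by nlinarith [hcon.1]), max_eq_left (by nlinarith [hcon.2])] at hlt
          linarith
        have hqκ1 : q * κ + κ ≤ 1 := by nlinarith
        have hqκ2 : κ ≤ q * κ := by nlinarith
        rcases le_or_gt (q * κ) f with h | h
        · have e : Int.fract (x - q * κ) = f - q * κ :=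
            fract_eq_of_sub_int ⌊x⌋ (by linarith) (by linarith) (by linarith)
          rw [e] at hy
          rw [abs_le]
          rcases hy with hy | hy <;> constructor <;> linarith
        · have e : Int.fract (x - q * κ) = f - q * κ + 1 :=
            fract_eq_of_sub_int (⌊x⌋ - 1) (by linarith) (by linarith) (by push_cast; linarith)
          rw [e] at hy
          rw [abs_le]
          rcases hy with hy | hy <;> constructor <;> linarith
      refine (norm_eC_sub_le _ _).trans ?_
      have : |-(ξ * Int.fract x) - -(ξ * (q / Q))| = |ξ| * |Int.fract x - q / Q| := by
        rw [← abs_mul, ← abs_neg]; congr 1; ring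
      rw [this]
      calc 2 * Real.pi * (|ξ| * |Int.fract x - q / Q|) ≤ 2 * Real.pi * (1 / 2 * (1 / Q)) := by
            gcongr
        _ = _ := by ring
  refine (norm_sum_le_of_le _ hterm).trans ?_
  rw [sum_add_distrib, ← mul_sum, sum_hat_translates Q hQ x, mul_one, sum_ite_eq']
  gcongr
  split_ifs
  · exact le_rfl
  · have := hat_nonneg Q x; positivity

/-- Fourier expansion of the tent inside a weighted sum: frequencies up to `Q ^ 6` are controlled by
the hypotheses, the others by the decay of the coefficients. -/
lemma norm_sum_mul_hat_le (Q : ℕ) (hQ : 1 ≤ Q) (s : Finset ℕ) (f : ℕ → ℂ) (hf : ∀ n, ‖f n‖ ≤ 1)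
    (x : ℕ → ℝ) (y B₀ B : ℝ) (h0 : ‖∑ n ∈ s, f n‖ ≤ B₀)
    (hB : ∀ l : ℤ, l ≠ 0 → |l| ≤ (Q : ℤ) ^ 6 → ‖∑ n ∈ s, f n * eC (l * x n)‖ ≤ B) :
    ‖∑ n ∈ s, f n * (hat Q (x n - y) : ℂ)‖ ≤
      B₀ / Q + B + (∑' l : ℕ, (l : ℝ) ^ (-(3 / 2) : ℝ)) * #s / Q ^ 2 := by
  have hQ1 : (1 : ℝ) ≤ Q := by exact_mod_cast hQ
  have hQ0 : (0 : ℝ) < Q := by linarith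
  have hB0 : 0 ≤ B := (norm_nonneg _).trans (hB 1 one_ne_zero (by
    rw [abs_one]; exact one_le_pow₀ (by exact_mod_cast hQ)))
  have hsum : HasSum (fun l : ℕ => ∑ n ∈ s, f n *
      ((hatCoeff Q l * Real.cos (2 * Real.pi * l * (x n - y)) : ℝ) : ℂ))
      (∑ n ∈ s, f n * ((hat Q (x n - y) - 1 / Q : ℝ) : ℂ)) :=
    hasSum_sum fun n _ => (Complex.hasSum_ofReal.mpr (hasSum_hat Q hQ (x n - y))).mul_left (f n)
  have hS : HasSum (fun l : ℕ => hatCoeff Q l * B + (#s / Q ^ 2) * (l : ℝ) ^ (-(3 / 2) : ℝ))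
      ((1 - 1 / Q) * B + (#s / Q ^ 2) * ∑' l : ℕ, (l : ℝ) ^ (-(3 / 2) : ℝ)) :=
    ((hasSum_hatCoeff Q hQ).mul_right B).add
      ((Real.summable_nat_rpow.mpr (by norm_num)).hasSum.mul_left _)
  have hbound : ∀ l : ℕ, ‖∑ n ∈ s, f n *
      ((hatCoeff Q l * Real.cos (2 * Real.pi * l * (x n - y)) : ℝ) : ℂ)‖ ≤
      hatCoeff Q l * B + (#s / Q ^ 2) * (l : ℝ) ^ (-(3 / 2) : ℝ) := by
    intro l
    have hγ := hatCoeff_nonneg Q l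
    have hlp : 0 ≤ (#s / (Q : ℝ) ^ 2) * (l : ℝ) ^ (-(3 / 2) : ℝ) := by positivity
    rcases Nat.eq_zero_or_pos l with rfl | hl
    · have : hatCoeff Q 0 = 0 := by simp [hatCoeff]
      rw [this]
      simp
    rcases Nat.lt_or_ge (Q ^ 6) l with hbig | hsmall
    · have hl0 : (0 : ℝ) < l := by exact_mod_cast hl
      have h1 : ‖∑ n ∈ s, f n *
          ((hatCoeff Q l * Real.cos (2 * Real.pi * l * (x n - y)) : ℝ) : ℂ)‖ ≤
          ∑ n ∈ s, hatCoeff Q l := by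
        refine norm_sum_le_of_le _ fun n _ => ?_
        rw [norm_mul, Complex.norm_real, Real.norm_eq_abs, abs_mul, abs_of_nonneg hγ]
        have h2 := Real.abs_cos_le_one (2 * Real.pi * l * (x n - y))
        calc ‖f n‖ * (hatCoeff Q l * |Real.cos (2 * Real.pi * l * (x n - y))|)
            ≤ 1 * (hatCoeff Q l * 1) := by gcongr; exact hf n
          _ = _ := by ring
      rw [sum_const, nsmul_eq_mul] at h1
      have h3 : (Q : ℝ) ^ 3 ≤ (l : ℝ) ^ (1 / 2 : ℝ) := by
        have : ((Q : ℝ) ^ 6) ^ (1 / 2 : ℝ) = (Q : ℝ) ^ 3 := by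
          rw [← Real.rpow_natCast, ← Real.rpow_mul hQ0.le, ← Real.rpow_natCast]; norm_num
        rw [← this]
        exact Real.rpow_le_rpow (by positivity) (by exact_mod_cast hbig.le) (by norm_num)
      have h4 : (l : ℝ) ^ 2 = (l : ℝ) ^ (1 / 2 : ℝ) * (l : ℝ) ^ (3 / 2 : ℝ) := by
        rw [← Real.rpow_add hl0, ← Real.rpow_natCast]; norm_num
      have h5 : Q / (l : ℝ) ^ 2 ≤ 1 / (Q : ℝ) ^ 2 * (l : ℝ) ^ (-(3 / 2) : ℝ) := by
        rw [h4, Real.rpow_neg hl0.le, ← one_div, one_div_mul_one_div,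
          div_le_div_iff₀ (by positivity) (by positivity), one_mul]
        calc Q * ((Q : ℝ) ^ 2 * (l : ℝ) ^ (3 / 2 : ℝ)) = (Q : ℝ) ^ 3 * (l : ℝ) ^ (3 / 2 : ℝ) := by
              ring
          _ ≤ _ := by gcongr
      have h6 := (hatCoeff_le Q l).trans h5
      calc _ ≤ #s * hatCoeff Q l := h1
        _ ≤ #s * (1 / (Q : ℝ) ^ 2 * (l : ℝ) ^ (-(3 / 2) : ℝ)) := by gcongr
        _ = (#s / (Q : ℝ) ^ 2) * (l : ℝ) ^ (-(3 / 2) : ℝ) := by ring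
        _ ≤ _ := by
          have : 0 ≤ hatCoeff Q l * B := by positivity
          linarith
    · have e : ∑ n ∈ s, f n *
          ((hatCoeff Q l * Real.cos (2 * Real.pi * l * (x n - y)) : ℝ) : ℂ) =
          (hatCoeff Q l / 2 : ℝ) * (eC (-(l * y)) * ∑ n ∈ s, f n * eC ((l : ℤ) * x n) +
            eC (l * y) * ∑ n ∈ s, f n * eC ((-(l : ℤ) : ℤ) * x n)) := by
        simp only [mul_sum, ← sum_add_distrib]
        refine sum_congr rfl fun n _ => ?_
        have h1 := eC_add_eC_neg (l * (x n - y))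
        have h2 : eC (l * (x n - y)) = eC (-(l * y)) * eC ((l : ℤ) * x n) := by
          rw [← eC_add]; congr 1; push_cast; ring
        have h3 : eC (-(l * (x n - y))) = eC (l * y) * eC ((-(l : ℤ) : ℤ) * x n) := by
          rw [← eC_add]; congr 1; push_cast; ring
        have h4 : 2 * Real.pi * (l * (x n - y)) = 2 * Real.pi * l * (x n - y) := by ring
        rw [h2, h3, h4] at h1
        push_cast at h1 ⊢
        linear_combination (-(f n * hatCoeff Q l / 2)) * h1
      have h1 := hB l (by exact_mod_cast hl.ne') (by
        rw [abs_of_nonneg (by positivity)]; exact_mod_cast hsmall)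
      have h2 := hB (-(l : ℤ)) (by simpa using hl.ne') (by
        rw [abs_neg, abs_of_nonneg (by positivity)]; exact_mod_cast hsmall)
      rw [e, norm_mul, Complex.norm_real, Real.norm_of_nonneg (by positivity)]
      have h3 : ‖eC (-(l * y)) * ∑ n ∈ s, f n * eC ((l : ℤ) * x n) +
            eC (l * y) * ∑ n ∈ s, f n * eC ((-(l : ℤ) : ℤ) * x n)‖ ≤ 2 * B := by
        refine (norm_add_le _ _).trans ?_
        rw [norm_mul, norm_mul, norm_eC, norm_eC]
        linarith
      calc hatCoeff Q l / 2 * _ ≤ hatCoeff Q l / 2 * (2 * B) := by gcongr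
        _ = hatCoeff Q l * B := by ring
        _ ≤ _ := by linarith
  have hmain := hsum.norm_le_of_bounded hS hbound
  have e : ∑ n ∈ s, f n * (hat Q (x n - y) : ℂ) =
      ∑ n ∈ s, f n * ((hat Q (x n - y) - 1 / Q : ℝ) : ℂ) + ((1 / Q : ℝ) : ℂ) * ∑ n ∈ s, f n := by
    rw [mul_sum, ← sum_add_distrib]
    refine sum_congr rfl fun n _ => ?_
    push_cast; ring
  rw [e]
  refine (norm_add_le _ _).trans ?_
  rw [norm_mul, Complex.norm_real, Real.norm_of_nonneg (by positivity)]
  have h1 : 1 / (Q : ℝ) * ‖∑ n ∈ s, f n‖ ≤ 1 / Q * B₀ := by gcongr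
  have h2 : 0 ≤ 1 / (Q : ℝ) * B := by positivity
  calc _ ≤ (1 - 1 / Q) * B + (#s / Q ^ 2) * ∑' l : ℕ, (l : ℝ) ^ (-(3 / 2) : ℝ) + 1 / Q * B₀ :=
        add_le_add hmain h1
    _ ≤ B + (#s / Q ^ 2) * (∑' l : ℕ, (l : ℝ) ^ (-(3 / 2) : ℝ)) + 1 / Q * B₀ := by linarith
    _ = _ := by ring

/-- Inserting a factor `e(-ξ fract xₙ)` in a sum costs little if all twists of the sum, and all pure
twists, by low nonzero frequencies are small. -/
lemma exists_twist_bound : ∃ C : ℝ, 2 ≤ C ∧ ∀ (Q : ℕ) (s : Finset ℕ) (f : ℕ → ℂ) (x : ℕ → ℝ)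
    (ξ B B' : ℝ), 1 ≤ Q → (∀ n, ‖f n‖ ≤ 1) → |ξ| ≤ 1 / 2 →
    (∀ l : ℤ, |l| ≤ (Q : ℤ) ^ 6 → ‖∑ n ∈ s, f n * eC (l * x n)‖ ≤ B) →
    (∀ l : ℤ, l ≠ 0 → |l| ≤ (Q : ℤ) ^ 6 → ‖∑ n ∈ s, eC (l * x n)‖ ≤ B') →
    ‖∑ n ∈ s, f n * eC (-(ξ * Int.fract (x n)))‖ ≤ C * (Q * B + B' + #s / Q) := by
  set S : ℝ := ∑' l : ℕ, (l : ℝ) ^ (-(3 / 2) : ℝ) with hS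
  have hS0 : 0 ≤ S := tsum_nonneg fun l => by positivity
  have hpi := Real.pi_pos
  refine ⟨3 * S + Real.pi + 2, by linarith, fun Q s f x ξ B B' hQ hf hξ hB hB' => ?_⟩
  have hQ1 : (1 : ℝ) ≤ Q := by exact_mod_cast hQ
  have hQ0 : (0 : ℝ) < Q := by linarith
  have hBz : ‖∑ n ∈ s, f n‖ ≤ B := by
    have := hB 0 (by rw [abs_zero]; positivity)
    simpa [eC_zero] using this
  have hB0 : 0 ≤ B := (norm_nonneg _).trans hBz
  have hB'0 : 0 ≤ B' := (norm_nonneg _).trans (hB' 1 one_ne_zero (by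
    rw [abs_one]; exact one_le_pow₀ (by exact_mod_cast hQ)))
  have h1 : ∀ y, ‖∑ n ∈ s, f n * (hat Q (x n - y) : ℂ)‖ ≤ B / Q + B + S * #s / Q ^ 2 := fun y =>
    norm_sum_mul_hat_le Q hQ s f hf x y B B hBz fun l _ hl => hB l hl
  have h2 : ∑ n ∈ s, hat Q (x n) ≤ #s / Q + B' + S * #s / Q ^ 2 := by
    have := norm_sum_mul_hat_le Q hQ s (fun _ => 1) (fun _ => by simp) x 0 #s B' (by simp)
      (fun l hl hl' => by simpa using hB' l hl hl')
    simp only [sub_zero, one_mul] at this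
    rw [← Complex.ofReal_sum, Complex.norm_real,
      Real.norm_of_nonneg (sum_nonneg fun n _ => hat_nonneg Q _)] at this
    exact this
  have e : ∑ n ∈ s, f n * eC (-(ξ * Int.fract (x n))) =
      ∑ n ∈ s, f n * (eC (-(ξ * Int.fract (x n))) -
        ∑ q ∈ range Q, eC (-(ξ * (q / Q))) * (hat Q (x n - q / Q) : ℂ)) +
      ∑ q ∈ range Q, eC (-(ξ * (q / Q))) * ∑ n ∈ s, f n * (hat Q (x n - q / Q) : ℂ) := by
    have : ∑ q ∈ range Q, eC (-(ξ * (q / Q))) * ∑ n ∈ s, f n * (hat Q (x n - q / Q) : ℂ) =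
        ∑ n ∈ s, f n * ∑ q ∈ range Q, eC (-(ξ * (q / Q))) * (hat Q (x n - q / Q) : ℂ) := by
      simp only [mul_sum]
      rw [sum_comm]
      exact sum_congr rfl fun n _ => sum_congr rfl fun q _ => by ring
    rw [this, ← sum_add_distrib]
    exact sum_congr rfl fun n _ => by ring
  have h3 : ‖∑ n ∈ s, f n * (eC (-(ξ * Int.fract (x n))) -
        ∑ q ∈ range Q, eC (-(ξ * (q / Q))) * (hat Q (x n - q / Q) : ℂ))‖ ≤
      ∑ n ∈ s, (Real.pi / Q + 2 * hat Q (x n)) := by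
    refine norm_sum_le_of_le _ fun n _ => ?_
    rw [norm_mul]
    have := norm_eC_fract_sub_hat Q hQ ξ hξ (x n)
    calc _ ≤ 1 * _ := mul_le_mul_of_nonneg_right (hf n) (norm_nonneg _)
      _ ≤ _ := by rw [one_mul]; exact this
  rw [sum_add_distrib, ← mul_sum, sum_const, nsmul_eq_mul] at h3
  have h4 : ‖∑ q ∈ range Q, eC (-(ξ * (q / Q))) * ∑ n ∈ s, f n * (hat Q (x n - q / Q) : ℂ)‖ ≤
      ∑ q ∈ range Q, (B / Q + B + S * #s / Q ^ 2) := by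
    refine norm_sum_le_of_le _ fun q _ => ?_
    rw [norm_mul, norm_eC, one_mul]
    exact h1 _
  rw [sum_const, nsmul_eq_mul, card_range] at h4
  have e1 : Q * (B / Q + B + S * #s / Q ^ 2) = B + Q * B + S * (#s / Q) := by field_simp
  have e2 : S * #s / (Q : ℝ) ^ 2 ≤ S * (#s / Q) := by
    rw [mul_div_assoc]
    gcongr
    exact le_self_pow₀ hQ1 (by norm_num)
  have e3 : B ≤ Q * B := by nlinarith
  have e4 : (#s : ℝ) * (Real.pi / Q) = Real.pi * (#s / Q) := by ring
  have e5 : 0 ≤ (3 * S + Real.pi) * (Q * B + B') := by positivity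
  rw [e]
  refine (norm_add_le _ _).trans ?_
  rw [e1] at h4
  rw [e4] at h3
  calc _ ≤ Real.pi * (#s / Q) + 2 * ∑ n ∈ s, hat Q (x n) + (B + Q * B + S * (#s / Q)) :=
        add_le_add h3 h4
    _ ≤ Real.pi * (#s / Q) + 2 * (#s / Q + B' + S * (#s / Q)) +
        (Q * B + Q * B + S * (#s / Q)) := by linarith
    _ ≤ _ := by linarith

/-! ### The sums with integer parts -/

lemma eC_sum {ι : Type*} (s : Finset ι) (g : ι → ℝ) : eC (∑ i ∈ s, g i) = ∏ i ∈ s, eC (g i) := by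
  classical
  induction s using Finset.induction_on with
  | empty => simp [eC_zero]
  | insert i s hi ih => rw [sum_insert hi, prod_insert hi, eC_add, ih]

lemma exists_powerSum_bound_of_le {m : ℕ} (hm : 0 < m) (c : Fin m → ℝ) (hpos : ∀ i, 0 < c i)
    (hinj : Function.Injective c) (hint : ∀ i, ∀ k : ℤ, c i ≠ (k : ℝ)) :
    ∃ C η : ℝ, 0 < C ∧ 0 < η ∧ ∀ (A : ℝ) (N : ℕ) (θ : Fin m → ℝ), 1 ≤ A → A ≤ N →
      (∀ i, |θ i| ≤ N + 1) → A ≤ phaseSize c θ N →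
      ‖∑ n ∈ Icc 1 N, eC (∑ i, θ i * (n : ℝ) ^ c i)‖ ≤ C * N * A ^ (-η) := by
  set b : ℝ := ∑ i, c i with hb
  have hb0 : 0 ≤ b := sum_nonneg fun i _ => (hpos i).le
  have hcb : ∀ i, c i ≤ b := fun i => single_le_sum (fun j _ => (hpos j).le) (mem_univ i)
  obtain ⟨C, η, hC, hη, h⟩ := exists_powerSum_bound hm c hpos hinj hint (b + m + 2) (by positivity)
  refine ⟨C + 1, η, by positivity, hη, fun A N θ hA hAN hθ hsize => ?_⟩
  have hN1' : (1 : ℝ) ≤ N := hA.trans hAN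
  have hN1 : 1 ≤ N := by exact_mod_cast hN1'
  have hN0 : (0 : ℝ) < N := by linarith
  rcases hN1.eq_or_lt with h1 | h2
  · have hA1 : A = 1 := le_antisymm (by rw [← h1] at hAN; simpa using hAN) hA
    rw [hA1, Real.one_rpow, mul_one]
    refine (norm_sum_eC_le _ _).trans ?_
    rw [Nat.card_Icc, Nat.add_sub_cancel]
    nlinarith
  have hN2 : (2 : ℝ) ≤ N := by exact_mod_cast h2
  have hup : phaseSize c θ N ≤ (N : ℝ) ^ (b + m + 2) := by
    have h1 : phaseSize c θ N ≤ ∑ _i : Fin m, (N : ℝ) ^ 2 * (N : ℝ) ^ b := by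
      refine sum_le_sum fun i _ => ?_
      gcongr
      · exact (hθ i).trans (by nlinarith)
      · exact hcb i
    have h3 : (m : ℝ) ≤ (N : ℝ) ^ m := by
      calc (m : ℝ) ≤ 2 ^ m := by exact_mod_cast Nat.lt_two_pow_self.le
        _ ≤ _ := by gcongr
    calc phaseSize c θ N ≤ m * ((N : ℝ) ^ 2 * (N : ℝ) ^ b) := by simpa using h1
      _ ≤ (N : ℝ) ^ m * ((N : ℝ) ^ 2 * (N : ℝ) ^ b) := by gcongr
      _ = _ := by
        rw [Real.rpow_add hN0, Real.rpow_add hN0, Real.rpow_natCast]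
        norm_num; ring
  refine (h N θ hN1 (hA.trans hsize) hup).trans ?_
  have h3 : phaseSize c θ N ^ (-η) ≤ A ^ (-η) :=
    Real.rpow_le_rpow_of_nonpos (by linarith) hsize (by linarith)
  calc C * N * phaseSize c θ N ^ (-η) ≤ C * N * A ^ (-η) := by gcongr
    _ ≤ _ := by gcongr; linarith

lemma abs_le_abs_add_int {ξ : ℝ} (hξ : |ξ| ≤ 1 / 2) (l : ℤ) : |ξ| ≤ |ξ + l| := by
  rcases eq_or_ne l 0 with rfl | hl
  · simp
  have h1 : (1 : ℝ) ≤ |(l : ℝ)| := by exact_mod_cast Int.one_le_abs hl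
  have h2 : |(l : ℝ)| ≤ |ξ + l| + |ξ| := by
    calc |(l : ℝ)| = |(ξ + l) - ξ| := by congr 1; ring
      _ ≤ _ := abs_sub _ _
  linarith

/-- Power saving for sums twisted by the factors `e(-ξᵢ fract (n ^ cᵢ))` with `i ∈ I`. These factors
are removed one at a time: expanding one of them changes the coefficient `ξᵢ` of `n ^ cᵢ` by an
integer, which does not decrease the size of the phase. -/
lemma exists_twisted_bound {m : ℕ} (hm : 0 < m) (c : Fin m → ℝ) (hpos : ∀ i, 0 < c i)
    (hinj : Function.Injective c) (hint : ∀ i, ∀ k : ℤ, c i ≠ (k : ℝ)) (I : Finset (Fin m)) :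
    ∃ C η : ℝ, 0 < C ∧ 0 < η ∧ ∀ (A : ℝ) (N : ℕ) (ξ θ : Fin m → ℝ), 1 ≤ A → A ≤ N →
      (∀ i, |ξ i| ≤ 1 / 2) → (∀ i, |θ i| ≤ N + 1) → (∀ i ∈ I, θ i = ξ i) → A ≤ phaseSize c θ N →
      ‖∑ n ∈ Icc 1 N, eC (∑ i, θ i * (n : ℝ) ^ c i) *
        ∏ i ∈ I, eC (-(ξ i * Int.fract ((n : ℝ) ^ c i)))‖ ≤ C * N * A ^ (-η) := by
  obtain ⟨C₀, η₀, hC₀, hη₀, hbase⟩ := exists_powerSum_bound_of_le hm c hpos hinj hint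
  induction I using Finset.induction_on with
  | empty =>
    refine ⟨C₀, η₀, hC₀, hη₀, fun A N ξ θ hA hAN _ hθ _ hsize => ?_⟩
    simpa using hbase A N θ hA hAN hθ hsize
  | insert i I hi ih =>
    obtain ⟨C, η, hC, hη, h⟩ := ih
    obtain ⟨D, hD, htwist⟩ := exists_twist_bound
    set a : ℝ := min 1 (c i) with ha
    have ha0 : 0 < a := lt_min one_pos (hpos i)
    set s : ℝ := min (min (η / 2) (η₀ * a)) (1 / 6) with hs
    have hs0 : 0 < s := by positivity
    have hs1 : s ≤ η / 2 := (min_le_left _ _).trans (min_le_left _ _)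
    have hs2 : s ≤ η₀ * a := (min_le_left _ _).trans (min_le_right _ _)
    have hs3 : s ≤ 1 / 6 := min_le_right _ _
    refine ⟨D * (C + C₀ + 2), s, by positivity, hs0, fun A N ξ θ hA hAN hξ hθ heq hsize => ?_⟩
    have hA0 : 0 < A := by linarith
    have hN0 : (0 : ℝ) < N := by linarith
    have hAs : 1 ≤ A ^ s := Real.one_le_rpow hA hs0.le
    set Q : ℕ := ⌊A ^ s⌋₊ with hQ
    have hQ1 : 1 ≤ Q := Nat.le_floor (by simpa using hAs)
    have hQ1' : (1 : ℝ) ≤ Q := by exact_mod_cast hQ1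
    have hQA : (Q : ℝ) ≤ A ^ s := Nat.floor_le (by linarith)
    have hQinv : 1 / (Q : ℝ) ≤ 2 * A ^ (-s) := by
      have := Nat.lt_floor_add_one (A ^ s)
      rw [← hQ] at this
      rw [Real.rpow_neg hA0.le, ← div_eq_mul_inv, div_le_div_iff₀ (by linarith) (by linarith)]
      linarith
    have hQ6 : (Q : ℝ) ^ 6 ≤ A := by
      calc (Q : ℝ) ^ 6 ≤ (A ^ s) ^ 6 := by gcongr
        _ = A ^ (s * 6) := by rw [← Real.rpow_natCast, ← Real.rpow_mul hA0.le]; norm_num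
        _ ≤ A ^ (1 : ℝ) := Real.rpow_le_rpow_of_exponent_le hA (by linarith)
        _ = A := Real.rpow_one A
    have hlN : ∀ l : ℤ, |l| ≤ (Q : ℤ) ^ 6 → |(l : ℝ)| ≤ N := fun l hl => by
      have : |(l : ℝ)| ≤ (Q : ℝ) ^ 6 := by exact_mod_cast hl
      linarith
    have hmain := htwist Q (Icc 1 N) (fun n => eC (∑ j, θ j * (n : ℝ) ^ c j) *
        ∏ j ∈ I, eC (-(ξ j * Int.fract ((n : ℝ) ^ c j)))) (fun n => (n : ℝ) ^ c i) (ξ i)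
      (C * N * A ^ (-η)) (C₀ * N * (A ^ a) ^ (-η₀)) hQ1
      (fun n => by
        rw [norm_mul, norm_prod, norm_eC, prod_congr rfl fun j _ => norm_eC _]; simp)
      (hξ i)
      (fun l hl => by
        have hθi : θ i = ξ i := heq i (mem_insert_self _ _)
        have hb := h A N ξ (θ + Pi.single i (l : ℝ)) hA hAN hξ
          (fun j => by
            rcases eq_or_ne j i with rfl | hj
            · rw [Pi.add_apply, Pi.single_eq_same, hθi]
              have := abs_add_le (ξ j) l
              linarith [hξ j, hlN l hl]
            · rw [Pi.add_apply, Pi.single_eq_of_ne hj, add_zero]; exact hθ j)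
          (fun j hj => by
            have hji : j ≠ i := fun e => hi (e ▸ hj)
            rw [Pi.add_apply, Pi.single_eq_of_ne hji, add_zero]
            exact heq j (mem_insert_of_mem hj))
          (hsize.trans (sum_le_sum fun j _ => by
            refine mul_le_mul_of_nonneg_right ?_ (by positivity)
            rcases eq_or_ne j i with rfl | hj
            · rw [Pi.add_apply, Pi.single_eq_same, hθi]
              exact abs_le_abs_add_int (hξ j) l
            · rw [Pi.add_apply, Pi.single_eq_of_ne hj, add_zero]))
        refine le_of_eq_of_le ?_ hb
        congr 1
        refine sum_congr rfl fun n _ => ?_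
        have : ∑ j, (θ + Pi.single i (l : ℝ) : Fin m → ℝ) j * (n : ℝ) ^ c j =
            ∑ j, θ j * (n : ℝ) ^ c j + l * (n : ℝ) ^ c i := by
          simp [add_mul, sum_add_distrib, Pi.single_apply]
        rw [this, eC_add]
        ring)
      (fun l hl0 hl => by
        have hl1 : (1 : ℝ) ≤ |(l : ℝ)| := by exact_mod_cast Int.one_le_abs hl0
        have hb := hbase (A ^ a) N (Pi.single i (l : ℝ)) (Real.one_le_rpow hA ha0.le)
          (by
            calc A ^ a ≤ A ^ (1 : ℝ) := Real.rpow_le_rpow_of_exponent_le hA (min_le_left _ _)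
              _ = A := Real.rpow_one A
              _ ≤ N := hAN)
          (fun j => by
            rcases eq_or_ne j i with rfl | hj
            · rw [Pi.single_eq_same]; linarith [hlN l hl]
            · rw [Pi.single_eq_of_ne hj, abs_zero]; positivity)
          (by
            have e : phaseSize c (Pi.single i (l : ℝ)) N = |(l : ℝ)| * (N : ℝ) ^ c i := by
              unfold phaseSize
              rw [sum_eq_single i, Pi.single_eq_same]
              · intro j _ hj; rw [Pi.single_eq_of_ne hj]; simp
              · simp
            rw [e]
            calc A ^ a ≤ A ^ c i := Real.rpow_le_rpow_of_exponent_le hA (min_le_right _ _)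
              _ ≤ (N : ℝ) ^ c i := Real.rpow_le_rpow hA0.le hAN (hpos i).le
              _ ≤ _ := le_mul_of_one_le_left (by positivity) hl1)
        refine le_of_eq_of_le ?_ hb
        congr 1
        refine sum_congr rfl fun n _ => ?_
        congr 1
        simp [Pi.single_apply])
    have e : ∀ n : ℕ, eC (∑ j, θ j * (n : ℝ) ^ c j) *
        ∏ j ∈ insert i I, eC (-(ξ j * Int.fract ((n : ℝ) ^ c j))) =
        (eC (∑ j, θ j * (n : ℝ) ^ c j) * ∏ j ∈ I, eC (-(ξ j * Int.fract ((n : ℝ) ^ c j)))) *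
          eC (-(ξ i * Int.fract ((n : ℝ) ^ c i))) := fun n => by
      rw [prod_insert hi]; ring
    simp only [e]
    refine hmain.trans ?_
    rw [Nat.card_Icc, Nat.add_sub_cancel]
    have b1 : Q * (C * N * A ^ (-η)) ≤ C * N * A ^ (-s) := by
      have : A ^ s * A ^ (-η) ≤ A ^ (-s) := by
        rw [← Real.rpow_add hA0]
        exact Real.rpow_le_rpow_of_exponent_le hA (by linarith)
      calc Q * (C * N * A ^ (-η)) ≤ A ^ s * (C * N * A ^ (-η)) := by gcongr
        _ = C * N * (A ^ s * A ^ (-η)) := by ring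
        _ ≤ _ := by gcongr
    have b2 : C₀ * N * (A ^ a) ^ (-η₀) ≤ C₀ * N * A ^ (-s) := by
      rw [← Real.rpow_mul hA0.le]
      gcongr
      linarith
    have b3 : (N : ℝ) / Q ≤ 2 * N * A ^ (-s) := by
      calc (N : ℝ) / Q = N * (1 / Q) := by ring
        _ ≤ N * (2 * A ^ (-s)) := by gcongr
        _ = _ := by ring
    calc D * (Q * (C * N * A ^ (-η)) + C₀ * N * (A ^ a) ^ (-η₀) + N / Q)
        ≤ D * (C * N * A ^ (-s) + C₀ * N * A ^ (-s) + 2 * N * A ^ (-s)) := by gcongr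
      _ = _ := by ring

lemma exists_expSum_bound {m : ℕ} (hm : 0 < m) (c : Fin m → ℝ) (hpos : ∀ i, 0 < c i)
    (hinj : Function.Injective c) (hint : ∀ i, ∀ k : ℤ, c i ≠ (k : ℝ)) :
    ∃ C η : ℝ, 0 < C ∧ 0 < η ∧ ∀ (A : ℝ) (N : ℕ) (ξ : Fin m → ℝ), 1 ≤ A → A ≤ N →
      (∀ i, |ξ i| ≤ 1 / 2) → A ≤ phaseSize c ξ N → ‖expSum m c ξ N‖ ≤ C * A ^ (-η) := by
  obtain ⟨C, η, hC, hη, h⟩ := exists_twisted_bound hm c hpos hinj hint univ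
  refine ⟨C, η, hC, hη, fun A N ξ hA hAN hξ hsize => ?_⟩
  have hN0 : (0 : ℝ) < N := by linarith
  have h1 := h A N ξ ξ hA hAN hξ (fun i => (hξ i).trans (by linarith)) (fun _ _ => rfl) hsize
  have e : ∀ n : ℕ, eC (∑ i, ξ i * (n : ℝ) ^ c i) *
      ∏ i, eC (-(ξ i * Int.fract ((n : ℝ) ^ c i))) =
      eC (∑ i, ξ i * (⌊(n : ℝ) ^ c i⌋ : ℝ)) := fun n => by
    rw [← eC_sum, ← eC_add, ← sum_add_distrib]
    congr 1
    refine sum_congr rfl fun i _ => ?_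
    rw [← Int.self_sub_floor]; ring
  simp only [e] at h1
  rw [expSum, norm_mul, norm_inv, Complex.norm_natCast, inv_mul_le_iff₀ hN0]
  linarith

/-! ### Counting jumps -/

lemma norm_expSum_le_one (m : ℕ) (c ξ : Fin m → ℝ) (N : ℕ) : ‖expSum m c ξ N‖ ≤ 1 := by
  rw [expSum, norm_mul, norm_inv, Complex.norm_natCast]
  have h := norm_sum_eC_le (Icc 1 N) fun n => ∑ i, ξ i * (⌊(n : ℝ) ^ c i⌋ : ℝ)
  rw [Nat.card_Icc, Nat.add_sub_cancel] at h
  exact inv_mul_le_one_of_le₀ h (by positivity)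

lemma expSum_sub_round (m : ℕ) (c ξ : Fin m → ℝ) (N : ℕ) :
    expSum m c ξ N = expSum m c (fun i => ξ i - round (ξ i)) N := by
  unfold expSum
  congr 1
  refine sum_congr rfl fun n _ => ?_
  have : ∑ i, ξ i * (⌊(n : ℝ) ^ c i⌋ : ℝ) =
      ∑ i, (ξ i - round (ξ i)) * (⌊(n : ℝ) ^ c i⌋ : ℝ) +
        ((∑ i, round (ξ i) * ⌊(n : ℝ) ^ c i⌋ : ℤ) : ℝ) := by
    push_cast
    rw [← sum_add_distrib]
    exact sum_congr rfl fun i _ => by ring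
  rw [this, eC_add, eC_int, mul_one]

/-- The means change slowly, so that a jump of size `δ` forces `log N` to increase by `δ / 2`. -/
lemma log_add_le_of_jump (m : ℕ) (c ξ : Fin m → ℝ) {N M : ℕ} (hN : 1 ≤ N) (hNM : N ≤ M) {δ : ℝ}
    (h : δ ≤ ‖expSum m c ξ M - expSum m c ξ N‖) : Real.log N + δ / 2 ≤ Real.log M := by
  have hN0 : (0 : ℝ) < N := by exact_mod_cast hN
  have hNM' : (N : ℝ) ≤ M := by exact_mod_cast hNM
  have hM0 : (0 : ℝ) < M := by linarith
  set g : ℕ → ℂ := fun n => eC (∑ i, ξ i * (⌊(n : ℝ) ^ c i⌋ : ℝ)) with hg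
  have hsplit : ∑ n ∈ Icc 1 M, g n = ∑ n ∈ Icc 1 N, g n + ∑ n ∈ Ico (N + 1) (M + 1), g n :=
    (sum_Ico_consecutive g (by omega : 1 ≤ N + 1) (by omega : N + 1 ≤ M + 1)).symm
  have e : expSum m c ξ M - expSum m c ξ N =
      ((M : ℝ)⁻¹ : ℝ) * ∑ n ∈ Ico (N + 1) (M + 1), g n -
        ((N : ℝ)⁻¹ - (M : ℝ)⁻¹ : ℝ) * ∑ n ∈ Icc 1 N, g n := by
    unfold expSum
    rw [hsplit]; push_cast; ring
  have h1 : ‖∑ n ∈ Ico (N + 1) (M + 1), g n‖ ≤ M - N := by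
    refine (norm_sum_eC_le _ _).trans ?_
    rw [Nat.card_Ico, Nat.add_sub_add_right, Nat.cast_sub hNM]
  have h2 : ‖∑ n ∈ Icc 1 N, g n‖ ≤ N := by
    refine (norm_sum_eC_le _ _).trans ?_
    rw [Nat.card_Icc, Nat.add_sub_cancel]
  have hinv : 0 ≤ (N : ℝ)⁻¹ - (M : ℝ)⁻¹ := sub_nonneg.mpr (inv_anti₀ hN0 hNM')
  have h3 : ‖expSum m c ξ M - expSum m c ξ N‖ ≤ 2 * (1 - N / M) := by
    rw [e]
    refine (norm_sub_le _ _).trans ?_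
    rw [norm_mul, norm_mul, Complex.norm_real, Complex.norm_real,
      Real.norm_of_nonneg (by positivity), Real.norm_of_nonneg hinv]
    calc _ ≤ (M : ℝ)⁻¹ * (M - N) + ((N : ℝ)⁻¹ - (M : ℝ)⁻¹) * N := by gcongr
      _ = _ := by field_simp; ring
  have h4 := Real.log_le_sub_one_of_pos (div_pos hN0 hM0)
  rw [Real.log_div hN0.ne' hM0.ne'] at h4
  linarith

lemma norm_expSum_sub_one_le {m : ℕ} (c : Fin m → ℝ) (hpos : ∀ i, 0 < c i) (ξ : Fin m → ℝ)
    {N : ℕ} (hN : 1 ≤ N) : ‖expSum m c ξ N - 1‖ ≤ 2 * Real.pi * phaseSize c ξ N := by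
  have hN0 : (0 : ℝ) < N := by exact_mod_cast hN
  have hN0' : (N : ℂ) ≠ 0 := by exact_mod_cast hN0.ne'
  have e : expSum m c ξ N - 1 =
      (N : ℂ)⁻¹ * ∑ n ∈ Icc 1 N, (eC (∑ i, ξ i * (⌊(n : ℝ) ^ c i⌋ : ℝ)) - eC 0) := by
    rw [sum_sub_distrib, mul_sub, expSum, eC_zero]
    simp [hN0']
  rw [e, norm_mul, norm_inv, Complex.norm_natCast, inv_mul_le_iff₀ hN0]
  have : ∀ n ∈ Icc 1 N, ‖eC (∑ i, ξ i * (⌊(n : ℝ) ^ c i⌋ : ℝ)) - eC 0‖ ≤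
      2 * Real.pi * phaseSize c ξ N := by
    intro n hn
    refine (norm_eC_sub_le _ _).trans ?_
    rw [sub_zero]
    gcongr
    refine (abs_sum_le_sum_abs _ _).trans (sum_le_sum fun i _ => ?_)
    rw [abs_mul]
    gcongr
    have hn0 : (0 : ℝ) ≤ (n : ℝ) ^ c i := by positivity
    rw [abs_of_nonneg (by exact_mod_cast Int.floor_nonneg.mpr hn0)]
    refine (Int.floor_le _).trans (Real.rpow_le_rpow (by positivity) ?_ (hpos i).le)
    exact_mod_cast (mem_Icc.mp hn).2
  refine (norm_sum_le_of_le _ this).trans ?_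
  rw [sum_const, nsmul_eq_mul, Nat.card_Icc, Nat.add_sub_cancel]

lemma phaseSize_scale_upper {m : ℕ} (c : Fin m → ℝ) (a : ℝ) (ha : ∀ i, a ≤ c i)
    (θ : Fin m → ℝ) {x y : ℝ} (hx : 0 < x) (hxy : x ≤ y) :
    (y / x) ^ a * phaseSize c θ x ≤ phaseSize c θ y := by
  have hy : 0 < y := by linarith
  unfold phaseSize
  rw [mul_sum]
  refine sum_le_sum fun i _ => ?_
  have h1 : (y / x) ^ a ≤ (y / x) ^ c i :=
    Real.rpow_le_rpow_of_exponent_le (by rwa [one_le_div hx]) (ha i)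
  have h2 : (y / x) ^ c i * x ^ c i = y ^ c i := by
    rw [← Real.mul_rpow (by positivity) hx.le, div_mul_cancel₀ _ hx.ne']
  calc (y / x) ^ a * (|θ i| * x ^ c i) ≤ (y / x) ^ c i * (|θ i| * x ^ c i) := by gcongr
    _ = |θ i| * ((y / x) ^ c i * x ^ c i) := by ring
    _ = _ := by rw [h2]

/-- The jump count for frequencies reduced modulo one. -/
lemma exists_jump_bound {m : ℕ} (hm : 0 < m) (c : Fin m → ℝ) (hpos : ∀ i, 0 < c i)
    (hinj : Function.Injective c) (hint : ∀ i, ∀ k : ℤ, c i ≠ (k : ℝ)) :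
    ∃ E : ℝ, 0 < E ∧ ∀ (δ : ℝ) (ξ : Fin m → ℝ) (J : ℕ) (w : ℕ → ℕ), 0 < δ → δ ≤ 2 →
      (∀ i, |ξ i| ≤ 1 / 2) → Monotone w → (∀ j, 1 ≤ w j) →
      (∀ j < J, δ ≤ ‖expSum m c ξ (w (j + 1)) - expSum m c ξ (w j)‖) → (J : ℝ) ≤ E / δ ^ 2 := by
  obtain ⟨C, η, hC, hη, hdecay⟩ := exists_expSum_bound hm c hpos hinj hint
  obtain ⟨a, ha0, ha⟩ : ∃ a : ℝ, 0 < a ∧ ∀ i, a ≤ c i := by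
    have : Nonempty (Fin m) := ⟨⟨0, hm⟩⟩
    obtain ⟨i, hi⟩ := Finite.exists_min c
    exact ⟨c i, hpos i, hi⟩
  set E₁ : ℝ := (4 * C + 2) / η with hE₁
  have hE₁0 : 0 < E₁ := by positivity
  set E : ℝ := E₁ + (E₁ + 16) / a with hE
  have hE0 : 0 < E := by positivity
  refine ⟨8 + 2 * E, by positivity, fun δ ξ J w hδ hδ2 hξ hmono hone hjump => ?_⟩
  have hδsq : δ ^ 2 ≤ 4 := by nlinarith
  have hpi := Real.pi_lt_four
  have hpi0 := Real.pi_pos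
  have hw0 : ∀ j, (0 : ℝ) < w j := fun j => by exact_mod_cast hone j
  have hwmono : ∀ {i j}, i ≤ j → (w i : ℝ) ≤ w j := fun h => by exact_mod_cast hmono h
  rcases Nat.lt_or_ge J 2 with hJ | hJ
  · have : (J : ℝ) ≤ 2 := by exact_mod_cast hJ.le
    rw [le_div_iff₀ (by positivity)]
    nlinarith
  obtain ⟨r, rfl⟩ : ∃ r, J = r + 2 := ⟨J - 2, by omega⟩
  have hlog : ∀ i, i ≤ r + 1 → Real.log (w 1) + i * (δ / 2) ≤ Real.log (w (i + 1)) := by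
    intro i
    induction i with
    | zero => intro _; simp
    | succ i ih =>
      intro hi
      have h1 := ih (by omega)
      have h2 := log_add_le_of_jump m c ξ (hone (i + 1)) (hmono (Nat.le_succ (i + 1)))
        (hjump (i + 1) (by omega))
      push_cast
      linarith
  have hlogr := hlog r (by omega)
  -- at `w 1` the phase is no longer negligible
  have hstart : δ / 16 < phaseSize c ξ (w 1) := by
    by_contra hcon
    push Not at hcon
    have h1 := norm_expSum_sub_one_le c hpos ξ (hone 1)
    have h0 := norm_expSum_sub_one_le c hpos ξ (hone 0)
    have h01 : phaseSize c ξ (w 0) ≤ phaseSize c ξ (w 1) :=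
      phaseSize_mono c hpos ξ (hw0 0).le (hwmono zero_le_one)
    have h2 := hjump 0 (by omega)
    have h3 : ‖expSum m c ξ (w (0 + 1)) - expSum m c ξ (w 0)‖ ≤
        ‖expSum m c ξ (w 1) - 1‖ + ‖expSum m c ξ (w 0) - 1‖ := by
      rw [show expSum m c ξ (w (0 + 1)) - expSum m c ξ (w 0) =
        (expSum m c ξ (w 1) - 1) - (expSum m c ξ (w 0) - 1) by ring_nf]
      exact norm_sub_le _ _
    have h4 : 2 * Real.pi * phaseSize c ξ (w 1) ≤ 2 * Real.pi * (δ / 16) := by gcongr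
    have h5 : 2 * Real.pi * phaseSize c ξ (w 0) ≤ 2 * Real.pi * (δ / 16) := by
      gcongr; exact h01.trans hcon
    nlinarith
  -- beyond `A` (in length and in size of the phase) the sums are smaller than `δ / 2`
  set A : ℝ := ((4 * C + 2) / δ) ^ (1 / η) with hA
  have hbase1 : 1 ≤ (4 * C + 2) / δ := by rw [one_le_div hδ]; linarith
  have hA1 : 1 ≤ A := Real.one_le_rpow hbase1 (by positivity)
  have hA0 : 0 < A := by linarith
  have hAη : C * A ^ (-η) < δ / 2 := by
    have : A ^ (-η) = δ / (4 * C + 2) := by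
      rw [hA, ← Real.rpow_mul (by positivity), mul_neg, one_div_mul_cancel hη.ne',
        Real.rpow_neg_one, inv_div]
    rw [this, ← mul_div_assoc, div_lt_div_iff₀ (by positivity) (by norm_num)]
    nlinarith
  have hlogA : Real.log A ≤ E₁ / δ := by
    rw [hA, Real.log_rpow (by positivity)]
    have := Real.log_le_self (x := (4 * C + 2) / δ) (by positivity)
    calc 1 / η * Real.log ((4 * C + 2) / δ) ≤ 1 / η * ((4 * C + 2) / δ) := by gcongr
      _ = _ := by rw [hE₁]; field_simp
  have hend : (w (r + 1) : ℝ) < A ∨ phaseSize c ξ (w (r + 1)) < A := by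
    by_contra hcon
    push Not at hcon
    obtain ⟨hc1, hc2⟩ := hcon
    have hle : (w (r + 1) : ℝ) ≤ w (r + 1 + 1) := hwmono (Nat.le_succ _)
    have h1 := hdecay A (w (r + 1)) ξ hA1 hc1 hξ hc2
    have h2 := hdecay A (w (r + 1 + 1)) ξ hA1 (hc1.trans hle) hξ
      (hc2.trans (phaseSize_mono c hpos ξ (hw0 _).le hle))
    have h3 := (hjump (r + 1) (by omega)).trans (norm_sub_le _ _)
    linarith
  have hratio : r * (δ / 2) ≤ E / δ := by
    have hw1 : 0 ≤ Real.log (w 1) := Real.log_nonneg (by exact_mod_cast hone 1)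
    have hEsplit : E / δ = E₁ / δ + (E₁ + 16) / a / δ := by rw [hE, add_div]
    rcases hend with h | h
    · have h1 := Real.log_lt_log (hw0 _) h
      have : 0 ≤ (E₁ + 16) / a / δ := by positivity
      linarith
    · have h1 := phaseSize_scale_upper c a ha ξ (hw0 1) (hwmono (by omega : 1 ≤ r + 1))
      have hq : 0 < (w (r + 1) : ℝ) / w 1 := div_pos (hw0 _) (hw0 _)
      have h2 : ((w (r + 1) : ℝ) / w 1) ^ a * (δ / 16) < A := by
        calc _ ≤ ((w (r + 1) : ℝ) / w 1) ^ a * phaseSize c ξ (w 1) := by gcongr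
          _ ≤ _ := h1
          _ < A := h
      have h3 := Real.log_lt_log (by positivity) h2
      rw [Real.log_mul (by positivity) (by positivity), Real.log_rpow hq,
        Real.log_div (hw0 _).ne' (hw0 _).ne'] at h3
      have h4 : -Real.log (δ / 16) ≤ 16 / δ := by
        rw [← Real.log_inv, inv_div]
        exact Real.log_le_self (by positivity)
      have h5 : a * (r * (δ / 2)) ≤ (E₁ + 16) / δ := by
        rw [add_div]
        have : a * (r * (δ / 2)) ≤ a * (Real.log (w (r + 1)) - Real.log (w 1)) := by
          gcongr; linarith
        linarith
      have h6 : r * (δ / 2) ≤ (E₁ + 16) / a / δ := by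
        rw [div_right_comm, le_div_iff₀ ha0]; linarith
      have : 0 ≤ E₁ / δ := by positivity
      linarith
  rw [le_div_iff₀ (by positivity)]
  rw [le_div_iff₀ hδ] at hratio
  push_cast
  nlinarith

/-- jump counting for exponential sums, Corollary 2.1 of the
paper: for non-integer `0 < c₁ < ⋯ < c_m` and `ε > 0` there is `C_ε`,
uniform in `ξ₁,…,ξ_m`, such that for every `δ > 0` the sequence of exponential
sums `(1/N) ∑_{n=1}^N e(ξ₁⌊n^{c₁}⌋+⋯+ξ_m⌊n^{c_m}⌋)` has at most
`C_ε δ^{−(2+ε)}` jumps of size `δ`: any chain `N₀ ≤ ⋯ ≤ N_J` in `ℕ = {1,2,…}`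
with `|a_{N_{j+1}} − a_{N_j}| ≥ δ` for all `j` satisfies `J ≤ C_ε δ^{−(2+ε)}`. -/
theorem stmt6 {m : ℕ} (hm : 0 < m) (c : Fin m → ℝ)
    (hpos : ∀ i, 0 < c i) (hmono : StrictMono c)
    (hint : ∀ i, ∀ k : ℤ, c i ≠ (k : ℝ))
    (ε : ℝ) (hε : 0 < ε) :
    ∃ C : ℝ, 0 < C ∧ ∀ δ : ℝ, 0 < δ → ∀ ξ : Fin m → ℝ,
      ∀ J : ℕ, ∀ u : Fin (J + 1) → ℕ, Monotone u → (∀ j, 1 ≤ u j) →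
        (∀ j : Fin J,
          δ ≤ ‖expSum m c ξ (u j.succ) - expSum m c ξ (u j.castSucc)‖) →
        (J : ℝ) ≤ C * δ ^ (-(2 + ε)) := by
  obtain ⟨E, hE, hbound⟩ := exists_jump_bound hm c hpos hmono.injective hint
  refine ⟨E * 2 ^ ε, by positivity, fun δ hδ ξ J u hu hone hjump => ?_⟩
  rcases lt_or_ge 2 δ with hbig | hsmall
  · -- the sums have modulus at most one, so there is no jump larger than two
    have hJ : J = 0 := by
      by_contra hne
      have h1 := hjump ⟨0, Nat.pos_of_ne_zero hne⟩
      have h2 := norm_sub_le (expSum m c ξ (u (Fin.succ ⟨0, Nat.pos_of_ne_zero hne⟩)))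
        (expSum m c ξ (u (Fin.castSucc ⟨0, Nat.pos_of_ne_zero hne⟩)))
      have h3 := norm_expSum_le_one m c ξ (u (Fin.succ ⟨0, Nat.pos_of_ne_zero hne⟩))
      have h4 := norm_expSum_le_one m c ξ (u (Fin.castSucc ⟨0, Nat.pos_of_ne_zero hne⟩))
      linarith
    rw [hJ, Nat.cast_zero]
    positivity
  have h := hbound δ (fun i => ξ i - round (ξ i)) J (fun j => u ⟨min j J, by omega⟩) hδ hsmall
    (fun i => abs_sub_round (ξ i))
    (fun i j hij => hu (Fin.mk_le_mk.mpr (min_le_min_right J hij)))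
    (fun j => hone _)
    (fun j hj => by
      rw [← expSum_sub_round, ← expSum_sub_round]
      have h1 := hjump ⟨j, hj⟩
      have e1 : (⟨min (j + 1) J, by omega⟩ : Fin (J + 1)) = Fin.succ ⟨j, hj⟩ :=
        Fin.ext (min_eq_left hj)
      have e2 : (⟨min j J, by omega⟩ : Fin (J + 1)) = Fin.castSucc ⟨j, hj⟩ :=
        Fin.ext (min_eq_left hj.le)
      rw [e1, e2]
      exact h1)
  refine h.trans ?_
  -- `δ ≤ 2` turns the exponent `-2` into `-(2 + ε)` at the price of a factor `2 ^ ε`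
  have e : E / δ ^ 2 = E * δ ^ ε * δ ^ (-(2 + ε)) := by
    rw [mul_assoc, ← Real.rpow_add hδ, show ε + -(2 + ε) = -((2 : ℕ) : ℝ) by push_cast; ring,
      Real.rpow_neg hδ.le, Real.rpow_natCast, div_eq_mul_inv]
  rw [e]
  gcongr

end
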